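/- arXiv:1505.01043 — 9 statements merged into one kernel-verified Lean document; each statement's English description precedes it below -/
import Mathlib

section
/- Let α > 0 and θ ∈ ℝ satisfy (π−θ)/α ∉ ℤ and (π+θ)/α ∉ ℤ. Then for every ρ ∈ (0,1) the series Σ_{k∈ℤ} ρ^{|k|} · exp(−2π²i|k|/α) · exp(−2πikθ/α) converges absolutely, and lim_{ρ→1⁻} (−i/α) · Σ_{k∈ℤ} ρ^{|k|} exp(−2π²i|k|/α) exp(−2πikθ/α) = −(1/(2α)) · sin(2π²/α) / ( sin(π(π−θ)/α) · sin(π(π+θ)/α) ). -/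
open Real Filter Topology

/-- Exponential of a negative doubled angle. -/
lemma adk_one_sub (a : ℝ) :
    1 - Complex.exp (-(2 * Complex.I * (a : ℂ))) =
      2 * Complex.I * (Real.sin a : ℂ) * (Real.cos a - Complex.I * Real.sin a) := by
  have e : Complex.exp (-(2 * Complex.I * (a : ℂ))) =
      (Complex.cos a - Complex.I * Complex.sin a) ^ 2 := by
    have : -(2 * Complex.I * (a : ℂ)) = ((2 : ℕ) : ℂ) * (((-a : ℝ) : ℂ) * Complex.I) := by
      push_cast; ring
    rw [this, Complex.exp_nat_mul, Complex.exp_mul_I]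
    push_cast
    rw [Complex.cos_neg, Complex.sin_neg]
    ring
  rw [e]
  push_cast
  have h := Complex.sin_sq_add_cos_sq (a : ℂ)
  have hI := Complex.I_sq
  linear_combination (-1 : ℂ) * h + (Complex.sin (a : ℂ)) ^ 2 * hI

lemma adk_cs_ne (a : ℝ) : ((Real.cos a : ℂ) - Complex.I * Real.sin a) *
    ((Real.cos a : ℂ) + Complex.I * Real.sin a) = 1 := by
  push_cast
  have h := Complex.sin_sq_add_cos_sq (a : ℂ)
  linear_combination h - (Complex.sin (a : ℂ)) ^ 2 * Complex.I_sq

lemma adk_inv (a : ℝ) :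
    (1 - Complex.exp (-(2 * Complex.I * (a : ℂ))))⁻¹ =
      (Real.cos a + Complex.I * Real.sin a) / (2 * Complex.I * (Real.sin a : ℂ)) := by
  rw [adk_one_sub, mul_inv, inv_eq_of_mul_eq_one_right (adk_cs_ne a)]
  ring

lemma adk_hasSum (u v : ℂ) (f : ℤ → ℂ) (hu : ‖u‖ < 1) (hv : ‖v‖ < 1)
    (h1 : ∀ n : ℕ, f n = u ^ n) (h2 : ∀ n : ℕ, f (-(n + 1 : ℤ)) = v ^ (n + 1)) :
    HasSum f ((1 - u)⁻¹ + v * (1 - v)⁻¹) := by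
  apply HasSum.of_nat_of_neg_add_one
  · simpa only [h1] using hasSum_geometric_of_norm_lt_one hu
  · simpa only [h2, pow_succ'] using (hasSum_geometric_of_norm_lt_one hv).mul_left v

lemma adk_norm (a : ℝ) : ‖Complex.exp (-(2 * Complex.I * (a : ℂ)))‖ = 1 := by
  have : -(2 * Complex.I * (a : ℂ)) = ((-2 * a : ℝ) : ℂ) * Complex.I := by push_cast; ring
  rw [this, Complex.norm_exp_ofReal_mul_I]

lemma adk_sin_ne (α x : ℝ) (h : ∀ n : ℤ, x / α ≠ (n : ℝ)) : Real.sin (π * x / α) ≠ 0 := by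
  intro hs
  obtain ⟨n, hn⟩ := Real.sin_eq_zero_iff.1 hs
  apply h n
  have hp := Real.pi_ne_zero
  apply mul_left_cancel₀ hp
  rw [← mul_div_assoc, ← hn, mul_comm]

/-- Abel summation of the Fourier series of the diffraction kernel of the cone of
angle `α`: for `ρ ∈ (0,1)` the series `∑_{k∈ℤ} ρ^{|k|} e^{-2π²i|k|/α} e^{-2πikθ/α}`
converges absolutely, and the Abel limit of `(-i/α)` times its sum, as `ρ → 1⁻`,
is `-(1/(2α)) sin(2π²/α) / (sin(π(π-θ)/α) sin(π(π+θ)/α))`. -/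
theorem abel_limit_diffraction_kernel (α θ : ℝ) (hα : 0 < α)
    (h₁ : ∀ n : ℤ, (π - θ) / α ≠ (n : ℝ)) (h₂ : ∀ n : ℤ, (π + θ) / α ≠ (n : ℝ)) :
    (∀ ρ ∈ Set.Ioo (0 : ℝ) 1,
      Summable (fun k : ℤ =>
        ‖(ρ : ℂ) ^ k.natAbs *
          Complex.exp (-(2 * (π : ℂ) ^ 2 * Complex.I * (k.natAbs : ℂ)) / (α : ℂ)) *
          Complex.exp (-(2 * (π : ℂ) * Complex.I * (k : ℂ) * (θ : ℂ)) / (α : ℂ))‖)) ∧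
    Tendsto (fun ρ : ℝ => (-Complex.I / (α : ℂ)) *
        ∑' k : ℤ, (ρ : ℂ) ^ k.natAbs *
          Complex.exp (-(2 * (π : ℂ) ^ 2 * Complex.I * (k.natAbs : ℂ)) / (α : ℂ)) *
          Complex.exp (-(2 * (π : ℂ) * Complex.I * (k : ℂ) * (θ : ℂ)) / (α : ℂ)))
      (nhdsWithin 1 (Set.Ioo (0 : ℝ) 1))
      (nhds ((↑(-(1 / (2 * α)) * Real.sin (2 * π ^ 2 / α) /
        (Real.sin (π * (π - θ) / α) * Real.sin (π * (π + θ) / α))) : ℂ))) := by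
  set a : ℝ := π * (π + θ) / α with ha
  set b : ℝ := π * (π - θ) / α with hb
  have hsa : Real.sin a ≠ 0 := adk_sin_ne α _ h₂
  have hsb : Real.sin b ≠ 0 := adk_sin_ne α _ h₁
  have hαc : (α : ℂ) ≠ 0 := by exact_mod_cast hα.ne'
  set u := Complex.exp (-(2 * Complex.I * (a : ℂ))) with hu
  set v := Complex.exp (-(2 * Complex.I * (b : ℂ))) with hv
  have key : ∀ ρ ∈ Set.Ioo (0 : ℝ) 1, HasSum (fun k : ℤ => (ρ : ℂ) ^ k.natAbs *
          Complex.exp (-(2 * (π : ℂ) ^ 2 * Complex.I * (k.natAbs : ℂ)) / (α : ℂ)) *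
          Complex.exp (-(2 * (π : ℂ) * Complex.I * (k : ℂ) * (θ : ℂ)) / (α : ℂ)))
      ((1 - ρ * u)⁻¹ + ρ * v * (1 - ρ * v)⁻¹) := by
    intro ρ hρ
    apply adk_hasSum
    · rw [norm_mul, hu, adk_norm, Complex.norm_real, Real.norm_of_nonneg hρ.1.le, mul_one]
      exact hρ.2
    · rw [norm_mul, hv, adk_norm, Complex.norm_real, Real.norm_of_nonneg hρ.1.le, mul_one]
      exact hρ.2
    · intro n
      rw [mul_pow, hu, ← Complex.exp_nat_mul, mul_assoc, ← Complex.exp_add, Int.natAbs_natCast]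
      congr 2
      rw [ha]
      push_cast
      field_simp
      ring
    · intro n
      have hn : (-(n + 1 : ℤ)).natAbs = n + 1 := by omega
      rw [mul_pow, hv, ← Complex.exp_nat_mul, mul_assoc, ← Complex.exp_add, hn]
      congr 2
      rw [hb]
      push_cast
      field_simp
      ring
  refine ⟨fun ρ hρ => (key ρ hρ).summable.norm, ?_⟩
  have hu1 : 1 - ((1 : ℝ) : ℂ) * u ≠ 0 := by
    rw [Complex.ofReal_one, one_mul, hu, adk_one_sub]
    exact mul_ne_zero (mul_ne_zero (by simp) (by exact_mod_cast hsa))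
      (left_ne_zero_of_mul_eq_one (adk_cs_ne a))
  have hv1 : 1 - ((1 : ℝ) : ℂ) * v ≠ 0 := by
    rw [Complex.ofReal_one, one_mul, hv, adk_one_sub]
    exact mul_ne_zero (mul_ne_zero (by simp) (by exact_mod_cast hsb))
      (left_ne_zero_of_mul_eq_one (adk_cs_ne b))
  have hc : ContinuousAt (fun ρ : ℝ => (-Complex.I / (α : ℂ)) *
      ((1 - (ρ : ℂ) * u)⁻¹ + ρ * v * (1 - (ρ : ℂ) * v)⁻¹)) 1 := by
    have hr : ContinuousAt (fun ρ : ℝ => (ρ : ℂ)) 1 := Complex.continuous_ofReal.continuousAt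
    have h3 : ContinuousAt (fun ρ : ℝ => (1 - (ρ : ℂ) * u)⁻¹) 1 :=
      (continuousAt_const.sub (hr.mul continuousAt_const)).inv₀ hu1
    have h4 : ContinuousAt (fun ρ : ℝ => (1 - (ρ : ℂ) * v)⁻¹) 1 :=
      (continuousAt_const.sub (hr.mul continuousAt_const)).inv₀ hv1
    exact continuousAt_const.mul (h3.add ((hr.mul continuousAt_const).mul h4))
  have hval : (-Complex.I / (α : ℂ)) *
      ((1 - ((1 : ℝ) : ℂ) * u)⁻¹ + ((1 : ℝ) : ℂ) * v * (1 - ((1 : ℝ) : ℂ) * v)⁻¹) =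
      ((-(1 / (2 * α)) * Real.sin (2 * π ^ 2 / α) / (Real.sin b * Real.sin a) : ℝ) : ℂ) := by
    have hab : 2 * π ^ 2 / α = a + b := by rw [ha, hb]; field_simp; ring
    have hv2 : v * (1 - v)⁻¹ = (1 - v)⁻¹ - 1 := by
      rw [Complex.ofReal_one, one_mul] at hv1
      field_simp
      ring
    rw [Complex.ofReal_one, one_mul, one_mul, hv2, hu, hv, adk_inv, adk_inv, hab, Real.sin_add]
    have hsa' : (Real.sin a : ℂ) ≠ 0 := by exact_mod_cast hsa
    have hsb' : (Real.sin b : ℂ) ≠ 0 := by exact_mod_cast hsb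
    have hI := Complex.I_ne_zero
    simp only [Complex.ofReal_mul, Complex.ofReal_div, Complex.ofReal_neg, Complex.ofReal_add,
      Complex.ofReal_one, Complex.ofReal_ofNat]
    field_simp
    ring
  rw [← hval]
  refine (hc.tendsto.mono_left nhdsWithin_le_nhds).congr' ?_
  filter_upwards [self_mem_nhdsWithin] with ρ hρ
  rw [(key ρ hρ).tsum_eq]
end

section
/- Let α > 0 with sin(2π²/α) ≠ 0, and let S_α be the diffraction coefficient S_α(θ) = −(1/(2α)) · sin(2π²/α) / ( sin(π(π−θ)/α) · sin(π(π+θ)/α) ). Then the limit of sin(θ) · S_α(−π−θ) as θ → 0 (through values θ ≠ 0) equals 1/(2π), and the limit of sin(θ) · S_α(θ) as θ → π (through values θ ≠ π) equals −1/(2π). -/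
open Real Filter Topology

/-- Regularized limits of the diffraction coefficient
`S_α(θ) = -(1/(2α)) sin(2π²/α) / (sin(π(π-θ)/α) sin(π(π+θ)/α))` of the Euclidean cone
of angle `α`: `sin θ · S_α(-π-θ) → 1/(2π)` as `θ → 0` and
`sin θ · S_α(θ) → -1/(2π)` as `θ → π`. -/
theorem diffraction_coefficient_limits (α : ℝ) (hα : 0 < α)
    (hsin : Real.sin (2 * π ^ 2 / α) ≠ 0)
    (S : ℝ → ℝ)
    (hS : ∀ θ : ℝ, S θ = -(1 / (2 * α)) * Real.sin (2 * π ^ 2 / α) /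
      (Real.sin (π * (π - θ) / α) * Real.sin (π * (π + θ) / α))) :
    Tendsto (fun θ : ℝ => Real.sin θ * S (-π - θ)) (𝓝[≠] 0) (𝓝 (1 / (2 * π))) ∧
    Tendsto (fun θ : ℝ => Real.sin θ * S θ) (𝓝[≠] π) (𝓝 (-(1 / (2 * π)))) := by
  have lin : ∀ c : ℝ, Tendsto (fun θ : ℝ => Real.sin (c * θ) / θ) (𝓝[≠] 0) (𝓝 c) := by
    intro c
    have h : HasDerivAt (fun θ : ℝ => Real.sin (c * θ)) c 0 := by
      have h1 : HasDerivAt (fun θ : ℝ => c * θ) c 0 := by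
        simpa using (hasDerivAt_id (0 : ℝ)).const_mul c
      simpa using h1.sin
    have h2 := hasDerivAt_iff_tendsto_slope.mp h
    refine h2.congr ?_
    intro x
    simp [slope_def_field]
  have hπ := Real.pi_pos
  have first : Tendsto (fun θ : ℝ => Real.sin θ * S (-π - θ)) (𝓝[≠] 0) (𝓝 (1 / (2 * π))) := by
    have hA : Tendsto (fun θ : ℝ => Real.sin (π * (2 * π + θ) / α)) (𝓝[≠] 0)
        (𝓝 (Real.sin (2 * π ^ 2 / α))) := by
      have hc : Continuous (fun θ : ℝ => Real.sin (π * (2 * π + θ) / α)) := by fun_prop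
      have := (hc.tendsto 0).mono_left (nhdsWithin_le_nhds (s := {0}ᶜ))
      convert this using 3
      ring
    have hB := lin (-(π / α))
    have h1 := lin 1
    have hne : Real.sin (2 * π ^ 2 / α) * (-(π / α)) ≠ 0 :=
      mul_ne_zero hsin (neg_ne_zero.mpr (by positivity))
    have key := (h1.const_mul (-(1 / (2 * α)) * Real.sin (2 * π ^ 2 / α))).div (hA.mul hB) hne
    have hval : -(1 / (2 * α)) * Real.sin (2 * π ^ 2 / α) * 1 /
        (Real.sin (2 * π ^ 2 / α) * (-(π / α))) = 1 / (2 * π) := by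
      generalize Real.sin (2 * π ^ 2 / α) = s at hsin
      field_simp
    rw [hval] at key
    refine key.congr' ?_
    filter_upwards [self_mem_nhdsWithin] with θ hθ
    have hθ : θ ≠ 0 := hθ
    have e1 : π * (π - (-π - θ)) / α = π * (2 * π + θ) / α := by ring
    have e2 : π * (π + (-π - θ)) / α = -(π / α) * θ := by ring
    simp only [Pi.div_apply]
    rw [hS, e1, e2, one_mul, ← mul_div_assoc, ← mul_div_assoc, div_div_div_cancel_right₀ hθ]
    ring
  refine ⟨first, ?_⟩
  have hsh : Tendsto (fun θ : ℝ => θ - π) (𝓝[≠] π) (𝓝[≠] 0) := by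
    refine tendsto_nhdsWithin_of_tendsto_nhds_of_eventually_within _ ?_ ?_
    · have hc : Continuous (fun θ : ℝ => θ - π) := by fun_prop
      have := (hc.tendsto π).mono_left (nhdsWithin_le_nhds (s := {π}ᶜ))
      simpa using this
    · filter_upwards [self_mem_nhdsWithin] with θ hθ
      exact sub_ne_zero.mpr hθ
  refine (first.comp hsh).neg.congr ?_
  intro θ
  have e : -π - (θ - π) = -θ := by ring
  simp only [Function.comp]
  rw [e, Real.sin_sub_pi, hS, hS, sub_neg_eq_add, ← sub_eq_add_neg,
    mul_comm (Real.sin (π * (π + θ) / α))]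
  ring
end

section
/- Fix ε ∈ {+1, −1}. For every test function φ on ℝ_t × C°_{4π}, one has ∫_0^{4π} ∫_0^∞ √r · e^{iεθ/2} · ( ∂_t²φ − ∂_r²φ − r⁻¹∂_rφ − r⁻²∂_θ²φ )(r, r, θ) dr dθ = 0. In other words, the distribution u = r^{−1/2} e^{iεθ/2} δ(t − r), supported exactly on the light cone {t = r}, is a distributional solution of the wave equation (∂_t² − Δ)u = 0 on ℝ_t × C°_{4π} (sharp Huygens principle on the cone of angle 4π). -/
open Real Filter Topology MeasureTheory

noncomputable def dirD (v : ℝ × ℝ × ℝ) (G : ℝ × ℝ × ℝ → ℂ) (p : ℝ × ℝ × ℝ) : ℂ := fderiv ℝ G p v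

lemma dirD_smooth {G : ℝ × ℝ × ℝ → ℂ} (hG : ContDiff ℝ (⊤ : ℕ∞) G) (v : ℝ × ℝ × ℝ) :
    ContDiff ℝ (⊤ : ℕ∞) (dirD v G) := by
  have h : ContDiff ℝ (⊤ : ℕ∞) (fderiv ℝ G) := hG.fderiv_right (by simp)
  exact h.clm_apply contDiff_const

lemma dirD_curve {G : ℝ × ℝ × ℝ → ℂ} (hG : ContDiff ℝ (⊤ : ℕ∞) G) {v : ℝ × ℝ × ℝ}
    {c : ℝ → ℝ × ℝ × ℝ} {x : ℝ} (hc : HasDerivAt c v x) :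
    HasDerivAt (fun y => G (c y)) (dirD v G (c x)) x := by
  have h := (hG.differentiable (by simp) (c x)).hasFDerivAt
  exact h.comp_hasDerivAt x hc

lemma dirD_add (G : ℝ × ℝ × ℝ → ℂ) (v w : ℝ × ℝ × ℝ) (p : ℝ × ℝ × ℝ) :
    dirD (v + w) G p = dirD v G p + dirD w G p := by simp [dirD]

lemma dirD_symm {G : ℝ × ℝ × ℝ → ℂ} (hG : ContDiff ℝ (⊤ : ℕ∞) G) (v w : ℝ × ℝ × ℝ)
    (p : ℝ × ℝ × ℝ) : dirD v (dirD w G) p = dirD w (dirD v G) p := by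
  have h : ContDiff ℝ (⊤ : ℕ∞) (fderiv ℝ G) := hG.fderiv_right (by simp)
  have hd : DifferentiableAt ℝ (fderiv ℝ G) p := h.differentiable (by simp) p
  have key : ∀ v w, dirD v (dirD w G) p = fderiv ℝ (fderiv ℝ G) p v w := by
    intro v w
    unfold dirD
    rw [fderiv_clm_apply hd (differentiableAt_const w)]
    simp
  rw [key, key]
  have hs : IsSymmSndFDerivAt ℝ G p :=
    (hG.contDiffAt).isSymmSndFDerivAt (by
      simp only [minSmoothness_of_isRCLikeNormedField]; exact WithTop.coe_le_coe.2 (le_top : (2 : ℕ∞) ≤ ⊤))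
  exact hs.eq v w

lemma dirD_supp {G : ℝ × ℝ × ℝ → ℂ} {a b : ℝ} (h : ∀ p, p.2.1 ∉ Set.Icc a b → G p = 0)
    (v : ℝ × ℝ × ℝ) : ∀ p, p.2.1 ∉ Set.Icc a b → dirD v G p = 0 := by
  intro p hp
  have ho : IsOpen {q : ℝ × ℝ × ℝ | q.2.1 ∉ Set.Icc a b} :=
    (isClosed_Icc.preimage (by fun_prop : Continuous fun q : ℝ × ℝ × ℝ => q.2.1)).isOpen_compl
  have he : G =ᶠ[𝓝 p] fun _ => 0 := by
    filter_upwards [ho.mem_nhds hp] with q hq using h q hq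
  unfold dirD
  rw [he.fderiv_eq]
  simp

lemma curve_t (r θ x : ℝ) : HasDerivAt (fun t : ℝ => ((t, r, θ) : ℝ × ℝ × ℝ)) (1, 0, 0) x :=
  (hasDerivAt_id x).prodMk ((hasDerivAt_const x r).prodMk (hasDerivAt_const x θ))
lemma curve_r (t θ x : ℝ) : HasDerivAt (fun r : ℝ => ((t, r, θ) : ℝ × ℝ × ℝ)) (0, 1, 0) x :=
  (hasDerivAt_const x t).prodMk ((hasDerivAt_id x).prodMk (hasDerivAt_const x θ))
lemma curve_th (t r x : ℝ) : HasDerivAt (fun θ : ℝ => ((t, r, θ) : ℝ × ℝ × ℝ)) (0, 0, 1) x :=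
  (hasDerivAt_const x t).prodMk ((hasDerivAt_const x r).prodMk (hasDerivAt_id x))
lemma curve_d (θ x : ℝ) :
    HasDerivAt (fun r : ℝ => ((r, r, θ) : ℝ × ℝ × ℝ)) ((1, 0, 0) + (0, 1, 0)) x := by
  have := (hasDerivAt_id x).prodMk ((hasDerivAt_id x).prodMk (hasDerivAt_const x θ))
  simpa using this

lemma csqrt_deriv {r : ℝ} (hr : 0 < r) :
    HasDerivAt (fun x : ℝ => (Real.sqrt x : ℂ)) (1 / (2 * (Real.sqrt r : ℂ))) r := by
  have := (Real.hasDerivAt_sqrt hr.ne').ofReal_comp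
  simpa using this

lemma supp_bounds {φ : ℝ → ℝ → ℝ → ℂ}
    (hsupp : ∃ K : Set (ℝ × ℝ), IsCompact K ∧ K ⊆ {p : ℝ × ℝ | 0 < p.2} ∧
      ∀ t r θ : ℝ, (t, r) ∉ K → φ t r θ = 0) :
    ∃ a b : ℝ, 0 < a ∧ a ≤ b ∧ ∀ t r θ, r ∉ Set.Icc a b → φ t r θ = 0 := by
  obtain ⟨K, hK, hpos, h0⟩ := hsupp
  rcases K.eq_empty_or_nonempty with rfl | hne
  · exact ⟨1, 1, one_pos, le_rfl, fun t r θ _ => h0 t r θ (by simp)⟩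
  obtain ⟨p, hp, hmin⟩ := hK.exists_isMinOn hne (continuous_snd.continuousOn)
  obtain ⟨q, hq, hmax⟩ := hK.exists_isMaxOn hne (continuous_snd.continuousOn)
  refine ⟨p.2, q.2, hpos hp, hmin hq, fun t r θ hr => h0 t r θ fun hk => hr ⟨hmin hk, hmax hk⟩⟩

/-- Sharp Huygens principle on the cone of angle `4π`: the distribution
`u = r^{-1/2} e^{iεθ/2} δ(t - r)` (ε = ±1), supported exactly on the light cone
`{t = r}`, solves the wave equation `(∂_t² - Δ)u = 0` distributionally, i.e. for
every test function `φ` on `ℝ_t × C°_{4π}` (smooth, `4π`-periodic in `θ`, with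
`(t,r)`-support in a compact subset of `ℝ × (0,∞)`) one has
`∫₀^{4π} ∫₀^∞ √r e^{iεθ/2} (∂_t²φ - ∂_r²φ - r⁻¹∂_rφ - r⁻²∂_θ²φ)(r,r,θ) dr dθ = 0`. -/
theorem sharp_huygens_cone_4pi (ε : ℝ) (hε : ε = 1 ∨ ε = -1)
    (φ : ℝ → ℝ → ℝ → ℂ)
    (hsmooth : ContDiff ℝ (⊤ : ℕ∞) (fun p : ℝ × ℝ × ℝ => φ p.1 p.2.1 p.2.2))
    (hper : ∀ t r θ : ℝ, φ t r (θ + 4 * π) = φ t r θ)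
    (hsupp : ∃ K : Set (ℝ × ℝ), IsCompact K ∧ K ⊆ {p : ℝ × ℝ | 0 < p.2} ∧
      ∀ t r θ : ℝ, (t, r) ∉ K → φ t r θ = 0) :
    ∫ θ in (0:ℝ)..(4 * π), ∫ r in Set.Ioi (0:ℝ),
      (Real.sqrt r : ℂ) * Complex.exp (Complex.I * (ε : ℂ) * (θ : ℂ) / 2) *
        (deriv (deriv (fun t : ℝ => φ t r θ)) r
          - deriv (deriv (fun x : ℝ => φ r x θ)) r
          - (r : ℂ)⁻¹ * deriv (fun x : ℝ => φ r x θ) r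
          - ((r : ℂ) ^ 2)⁻¹ * deriv (deriv (fun y : ℝ => φ r r y)) θ) = 0 := by
  obtain ⟨α, β, hα, hαβ, hs⟩ := supp_bounds hsupp
  set F : ℝ × ℝ × ℝ → ℂ := fun p => φ p.1 p.2.1 p.2.2 with hF
  have hFs : ∀ p, p.2.1 ∉ Set.Icc α β → F p = 0 := fun p hp => hs _ _ _ hp
  set A := dirD (1, 0, 0) F with hA
  set B := dirD (0, 1, 0) F with hB
  set C := dirD (0, 0, 1) F with hC
  have sA : ContDiff ℝ (⊤ : ℕ∞) A := dirD_smooth hsmooth _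
  have sB : ContDiff ℝ (⊤ : ℕ∞) B := dirD_smooth hsmooth _
  have sC : ContDiff ℝ (⊤ : ℕ∞) C := dirD_smooth hsmooth _
  have zA : ∀ p, p.2.1 ∉ Set.Icc α β → A p = 0 := dirD_supp hFs (1, 0, 0)
  have zB : ∀ p, p.2.1 ∉ Set.Icc α β → B p = 0 := dirD_supp hFs (0, 1, 0)
  have zC : ∀ p, p.2.1 ∉ Set.Icc α β → C p = 0 := dirD_supp hFs (0, 0, 1)
  set AA := dirD (1, 0, 0) A with hAA
  set BB := dirD (0, 1, 0) B with hBB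
  set CC := dirD (0, 0, 1) C with hCC
  have zAA : ∀ p, p.2.1 ∉ Set.Icc α β → AA p = 0 := dirD_supp zA (1, 0, 0)
  have zBB : ∀ p, p.2.1 ∉ Set.Icc α β → BB p = 0 := dirD_supp zB (0, 1, 0)
  have zCC : ∀ p, p.2.1 ∉ Set.Icc α β → CC p = 0 := dirD_supp zC (0, 0, 1)
  have cF : Continuous F := hsmooth.continuous
  have cA : Continuous A := sA.continuous
  have cB : Continuous B := sB.continuous
  have cC : Continuous C := sC.continuous
  have cAA : Continuous AA := (dirD_smooth sA _).continuous
  have cBB : Continuous BB := (dirD_smooth sB _).continuous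
  have cCC : Continuous CC := (dirD_smooth sC _).continuous
  have d1 : ∀ r θ : ℝ, deriv (deriv (fun t : ℝ => φ t r θ)) r = AA (r, r, θ) := by
    intro r θ
    have : deriv (fun t : ℝ => φ t r θ) = fun t => A (t, r, θ) :=
      funext fun t => (dirD_curve hsmooth (curve_t r θ t)).deriv
    rw [this]
    exact (dirD_curve sA (curve_t r θ r)).deriv
  have d2' : ∀ r θ : ℝ, deriv (fun x : ℝ => φ r x θ) = fun x => B (r, x, θ) :=
    fun r θ => funext fun t => (dirD_curve hsmooth (curve_r r θ t)).deriv
  have d2 : ∀ r θ : ℝ, deriv (deriv (fun x : ℝ => φ r x θ)) r = BB (r, r, θ) := by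
    intro r θ
    rw [d2']
    exact (dirD_curve sB (curve_r r θ r)).deriv
  have d3' : ∀ r : ℝ, deriv (fun y : ℝ => φ r r y) = fun y => C (r, r, y) :=
    fun r => funext fun t => (dirD_curve hsmooth (curve_th r r t)).deriv
  have d3 : ∀ r θ : ℝ, deriv (deriv (fun y : ℝ => φ r r y)) θ = CC (r, r, θ) := by
    intro r θ
    rw [d3']
    exact (dirD_curve sC (curve_th r r θ)).deriv
  have pC : ∀ r θ : ℝ, C (r, r, θ + 4 * π) = C (r, r, θ) := by
    intro r θ
    have h1 : deriv (fun y : ℝ => φ r r y) (θ + 4 * π) = C (r, r, θ + 4 * π) :=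
      congrFun (d3' r) (θ + 4 * π)
    have h2 : deriv (fun y : ℝ => φ r r y) θ = C (r, r, θ) := congrFun (d3' r) θ
    rw [← h1, ← h2, ← deriv_comp_add_const]
    simp only [hper]
  simp only [d1, d2, d3]
  simp only [d2']
  set a := α / 2 with ha
  set b := β + 1 with hb
  have ha0 : 0 < a := by positivity
  have hab : a ≤ b := by linarith
  have haO : a ∉ Set.Icc α β := fun h => by have := h.1; linarith
  have hbO : b ∉ Set.Icc α β := fun h => by have := h.2; linarith
  set e : ℝ → ℂ := fun θ => Complex.exp (Complex.I * (ε : ℂ) * (θ : ℂ) / 2) with he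
  have ce : Continuous e := by simp only [he]; fun_prop
  have hε2 : (ε : ℂ) ^ 2 = 1 := by rcases hε with h | h <;> simp [h]
  have de : ∀ θ, HasDerivAt e (Complex.I * ε / 2 * e θ) θ := by
    intro θ
    have h1 : HasDerivAt (fun x : ℝ => Complex.I * (ε : ℂ) * (x : ℂ) / 2)
        (Complex.I * ε * 1 / 2) θ :=
      (((hasDerivAt_id θ).ofReal_comp).const_mul _).div_const 2
    have := h1.cexp
    convert this using 1
    simp only [he]; ring
  have e4 : e (4 * π) = e 0 := by
    have h1 : e 0 = 1 := by simp [he]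
    rw [h1]
    simp only [he]
    rw [Complex.exp_eq_one_iff]
    rcases hε with h | h
    · exact ⟨1, by rw [h]; push_cast; ring⟩
    · exact ⟨-1, by rw [h]; push_cast; ring⟩
  let s : ℝ → ℂ := fun r => (Real.sqrt r : ℂ)
  have s0 : ∀ r, 0 < r → s r ≠ 0 := fun r hr => by
    simp only [s]; exact_mod_cast (Real.sqrt_pos.2 hr).ne'
  have s2 : ∀ r : ℝ, 0 < r → (r : ℂ) = s r ^ 2 := fun r hr => by
    simp only [s]; exact_mod_cast (Real.sq_sqrt hr.le).symm
  have cs : Continuous s := by simp only [s]; fun_prop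
  let N : ℝ → ℝ → ℂ := fun θ r => -((s r)⁻¹ ^ 3 * (e θ * (CC (r, r, θ) + F (r, r, θ) / 4)))
  let P : ℝ → ℝ → ℂ := fun θ r =>
    e θ * (s r * (A (r, r, θ) - B (r, r, θ)) - (s r)⁻¹ * F (r, r, θ) / 2)
  let P' : ℝ → ℝ → ℂ := fun θ r =>
    e θ * (s r * (AA (r, r, θ) - BB (r, r, θ)) - (s r)⁻¹ * B (r, r, θ)
      + (s r)⁻¹ ^ 3 * F (r, r, θ) / 4)
  have dP : ∀ θ r, 0 < r → HasDerivAt (P θ) (P' θ r) r := by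
    intro θ r hr
    have hs' := csqrt_deriv hr
    have hF' := dirD_curve hsmooth (curve_d θ r)
    have hA' := dirD_curve sA (curve_d θ r)
    have hB' := dirD_curve sB (curve_d θ r)
    rw [dirD_add] at hF' hA' hB'
    have hsym : dirD (0, 1, 0) A (r, r, θ) = dirD (1, 0, 0) B (r, r, θ) :=
      dirD_symm hsmooth _ _ _
    rw [hsym] at hA'
    have := ((hs'.mul (hA'.sub hB')).sub (((hs'.inv (s0 r hr)).mul hF').div_const 2)).const_mul (e θ)
    refine this.congr_deriv ?_
    have h0 := s0 r hr
    simp only [P', ← hA, ← hB, ← hAA, ← hBB, Pi.inv_apply, Pi.sub_apply]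
    change _ = _
    simp only [s] at h0 ⊢
    field_simp
    ring
  have inner : ∀ θ : ℝ, (∫ r in Set.Ioi (0:ℝ),
      (Real.sqrt r : ℂ) * e θ * (AA (r, r, θ) - BB (r, r, θ) - (r : ℂ)⁻¹ * B (r, r, θ)
          - ((r : ℂ) ^ 2)⁻¹ * CC (r, r, θ))) = ∫ r in a..b, N θ r := by
    intro θ
    have h1 : (∫ r in a..b, (Real.sqrt r : ℂ) * e θ * (AA (r, r, θ) - BB (r, r, θ)
        - (r : ℂ)⁻¹ * B (r, r, θ) - ((r : ℂ) ^ 2)⁻¹ * CC (r, r, θ)))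
        = ∫ r in a..b, (P' θ r + N θ r) := by
      apply intervalIntegral.integral_congr
      intro r hr
      rw [Set.uIcc_of_le hab] at hr
      have hr0 : 0 < r := lt_of_lt_of_le ha0 hr.1
      have h0 := s0 r hr0
      simp only [P', N, s2 r hr0]
      change s r * _ * _ = _
      field_simp
      ring
    have cont : ∀ r ∈ Set.uIcc a b, s r ≠ 0 := by
      intro r hr
      rw [Set.uIcc_of_le hab] at hr
      exact s0 r (lt_of_lt_of_le ha0 hr.1)
    have csi : ContinuousOn (fun r => (s r)⁻¹) (Set.uIcc a b) := cs.continuousOn.inv₀ cont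
    have iP : IntervalIntegrable (P' θ) volume a b := by
      apply ContinuousOn.intervalIntegrable
      simp only [P']
      fun_prop
    have iN : IntervalIntegrable (N θ) volume a b := by
      apply ContinuousOn.intervalIntegrable
      simp only [N]
      fun_prop
    have h2 : (∫ r in a..b, P' θ r) = 0 := by
      rw [intervalIntegral.integral_eq_sub_of_hasDerivAt (f := P θ) _ iP]
      · simp only [P]
        rw [hFs _ (show ((b, b, θ) : ℝ × ℝ × ℝ).2.1 ∉ _ from hbO),
          hFs _ (show ((a, a, θ) : ℝ × ℝ × ℝ).2.1 ∉ _ from haO),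
          zA _ (show ((b, b, θ) : ℝ × ℝ × ℝ).2.1 ∉ _ from hbO),
          zA _ (show ((a, a, θ) : ℝ × ℝ × ℝ).2.1 ∉ _ from haO),
          zB _ (show ((b, b, θ) : ℝ × ℝ × ℝ).2.1 ∉ _ from hbO),
          zB _ (show ((a, a, θ) : ℝ × ℝ × ℝ).2.1 ∉ _ from haO)]
        simp
      · intro r hr
        rw [Set.uIcc_of_le hab] at hr
        exact dP θ r (lt_of_lt_of_le ha0 hr.1)
    rw [intervalIntegral.integral_add iP iN, h2, zero_add] at h1
    rw [← h1, intervalIntegral.integral_of_le hab]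
    apply setIntegral_eq_of_subset_of_forall_sdiff_eq_zero measurableSet_Ioi
    · intro r hr
      exact lt_trans ha0 hr.1
    · intro r hr
      have hrO : ((r, r, θ) : ℝ × ℝ × ℝ).2.1 ∉ Set.Icc α β := fun h =>
        hr.2 ⟨by have := h.1; simp only at this; linarith, by
          have := h.2; simp only at this; linarith⟩
      rw [zAA _ hrO, zBB _ hrO, zB _ hrO, zCC _ hrO]
      simp
  have step : (∫ θ in (0:ℝ)..(4 * π), ∫ r in a..b, N θ r)
      = ∫ r in a..b, ∫ θ in (0:ℝ)..(4 * π), N θ r := by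
    apply intervalIntegral_intervalIntegral_swap
    have hco : ContinuousOn (Function.uncurry N) (Set.uIcc 0 (4 * π) ×ˢ Set.uIcc a b) := by
      have cont : ∀ p ∈ Set.uIcc (0:ℝ) (4 * π) ×ˢ Set.uIcc a b, s p.2 ≠ 0 := by
        intro p hp
        have hr := hp.2
        rw [Set.uIcc_of_le hab] at hr
        exact s0 p.2 (lt_of_lt_of_le ha0 hr.1)
      have csi : ContinuousOn (fun p : ℝ × ℝ => (s p.2)⁻¹) (Set.uIcc 0 (4 * π) ×ˢ Set.uIcc a b) :=
        (cs.comp continuous_snd).continuousOn.inv₀ cont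
      have : Function.uncurry N = fun p : ℝ × ℝ =>
        -((s p.2)⁻¹ ^ 3 * (e p.1 * (CC (p.2, p.2, p.1) + F (p.2, p.2, p.1) / 4))) := rfl
      rw [this]
      fun_prop
    exact (hco.integrableOn_compact (isCompact_uIcc.prod isCompact_uIcc)).mono_set
      (Set.prod_mono Set.uIoc_subset_uIcc Set.uIoc_subset_uIcc)
  simp only [he] at inner
  simp only [inner]
  rw [step]
  have last : ∀ r, (∫ θ in (0:ℝ)..(4 * π), N θ r) = 0 := by
    intro r
    rw [intervalIntegral.integral_eq_sub_of_hasDerivAt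
      (f := fun θ => -((s r)⁻¹ ^ 3 * (e θ * C (r, r, θ) - Complex.I * ε / 2 * e θ * F (r, r, θ))))]
    · have hc := pC r 0
      have hf : F (r, r, 0 + 4 * π) = F (r, r, 0) := hper r r 0
      rw [zero_add] at hc hf
      simp only [hc, hf, e4, sub_self]
    · intro θ _
      have hC' := dirD_curve sC (curve_th r r θ)
      have hF' := dirD_curve hsmooth (curve_th r r θ)
      have := ((((de θ).mul hC').sub
        (((de θ).const_mul (Complex.I * ε / 2)).mul hF')).const_mul ((s r)⁻¹ ^ 3)).neg
      refine this.congr_deriv ?_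
      simp only [N, ← hC, ← hCC]
      linear_combination ((s r)⁻¹ ^ 3 * e θ * F (r, r, θ) / 4) * (Complex.I ^ 2 * hε2 + Complex.I_sq)
    · apply Continuous.intervalIntegrable
      simp only [N]
      fun_prop
  simp [last]
end

section
/- Let ρ : ℝ → ℝ be smooth with compact support and with ρ ≡ 1 on a neighborhood of 0, and define ζ : (0,∞) × ℝ → ℂ by ζ(r,θ) = √r · e^{iθ/2} · ρ(r²) (a well-defined function on C_{4π}). Then ∫_0^{4π} ∫_0^∞ (Δζ)(r,θ) · (∂_w ζ)(r,θ) · r dr dθ = −π, where Δζ = ∂_r²ζ + r⁻¹∂_rζ + r⁻²∂_θ²ζ, ∂_wζ = (e^{−iθ}/2)(∂_rζ − (i/r)∂_θζ), and the product of the two factors is taken without complex conjugation (bilinear pairing). Equivalently, for the nonnegative Laplacian Δ_g = −Δ the bilinear pairing ⟨[∂_w, Δ_g]ζ, ζ⟩ = −2⟨Δ_gζ, ∂_wζ⟩ equals −2π. -/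
open Real Filter Topology MeasureTheory


lemma aux_sq_support (f : ℝ → ℝ) (hf : HasCompactSupport f) :
    ∃ M : ℝ, ∀ x, M < |x| → f (x ^ 2) = 0 := by
  obtain ⟨M, hM⟩ := hf.isCompact.isBounded.subset_closedBall 0
  refine ⟨max M 1, fun x hx => ?_⟩
  by_contra h
  have h2 : x ^ 2 ∈ Metric.closedBall (0:ℝ) M := hM (subset_tsupport f h)
  rw [mem_closedBall_zero_iff, Real.norm_eq_abs, abs_of_nonneg (sq_nonneg x)] at h2
  have h3 := (max_lt_iff.1 hx)
  have h4 : x ^ 2 = |x| ^ 2 := (sq_abs x).symm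
  nlinarith [h3.1, h3.2]

lemma aux_integral (ρ : ℝ → ℝ) (hρ : ContDiff ℝ (⊤ : ℕ∞) ρ) (hcs : HasCompactSupport ρ)
    (h0 : ρ 0 = 1) :
    ∫ r in Set.Ioi (0:ℝ), (1/2) * (ρ (r^2) + 2 * r^2 * deriv ρ (r^2)) *
      (6 * r * deriv ρ (r^2) + 4 * r^3 * deriv (deriv ρ) (r^2)) = -(1/4) := by
  have hρ1 : ContDiff ℝ (⊤ : ℕ∞) (deriv ρ) := by
    exact (contDiff_infty_iff_deriv.1 hρ).2
  have hd : Differentiable ℝ ρ := hρ.differentiable (by simp)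
  have hd1 : Differentiable ℝ (deriv ρ) := hρ1.differentiable (by simp)
  set G : ℝ → ℝ := fun r => (ρ (r^2) + 2 * r^2 * deriv ρ (r^2))^2 / 4 with hG
  have hGc : ContDiff ℝ 1 G := by
    have a : ContDiff ℝ 1 ρ := hρ.of_le (by exact_mod_cast le_top)
    have b : ContDiff ℝ 1 (deriv ρ) := hρ1.of_le (by exact_mod_cast le_top)
    fun_prop
  have hGs : HasCompactSupport G := by
    obtain ⟨M, hM⟩ := aux_sq_support ρ hcs
    obtain ⟨N, hN⟩ := aux_sq_support (deriv ρ) hcs.deriv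
    refine HasCompactSupport.intro (isCompact_closedBall (0:ℝ) (max M N)) fun x hx => ?_
    rw [mem_closedBall_zero_iff, Real.norm_eq_abs, not_le, max_lt_iff] at hx
    simp [hG, hM x hx.1, hN x hx.2]
  have key := hGs.integral_Ioi_deriv_eq hGc 0
  have hG0 : G 0 = 1/4 := by simp [hG, h0]
  rw [hG0] at key
  rw [← key]
  congr 1
  funext r
  symm
  have hsq : HasDerivAt (fun r : ℝ => r^2) (2 * r) r := by simpa using hasDerivAt_pow 2 r
  have e1 : HasDerivAt (fun r : ℝ => ρ (r^2)) (deriv ρ (r^2) * (2 * r)) r :=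
    (hd (r^2)).hasDerivAt.comp r hsq
  have e2 : HasDerivAt (fun r : ℝ => deriv ρ (r^2)) (deriv (deriv ρ) (r^2) * (2 * r)) r :=
    HasDerivAt.comp (h₂ := deriv ρ) r (hd1 (r^2)).hasDerivAt hsq
  have e3 := ((e1.add ((hsq.const_mul 2).mul e2)).pow 2).div_const 4
  refine (e3.congr_deriv ?_).deriv
  simp only [Pi.add_apply, Pi.mul_apply]
  ring

lemma aux_g (ρ : ℝ → ℝ) (hρ : ContDiff ℝ (⊤ : ℕ∞) ρ) (r : ℝ) (hr : 0 < r) :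
    HasDerivAt (fun x : ℝ => √x * ρ (x^2))
      (√r * (ρ (r^2) / (2 * r) + 2 * r * deriv ρ (r^2))) r ∧
    HasDerivAt (fun x : ℝ => √x * (ρ (x^2) / (2 * x) + 2 * x * deriv ρ (x^2)))
      (√r * (-ρ (r^2) / (4 * r^2) + 4 * deriv ρ (r^2)
        + 4 * r^2 * deriv (deriv ρ) (r^2))) r := by
  have hρ1 : ContDiff ℝ (⊤ : ℕ∞) (deriv ρ) := by
    exact (contDiff_infty_iff_deriv.1 hρ).2
  have hd : Differentiable ℝ ρ := hρ.differentiable (by simp)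
  have hd1 : Differentiable ℝ (deriv ρ) := hρ1.differentiable (by simp)
  have hsq : HasDerivAt (fun r : ℝ => r^2) (2 * r) r := by simpa using hasDerivAt_pow 2 r
  have e1 : HasDerivAt (fun r : ℝ => ρ (r^2)) (deriv ρ (r^2) * (2 * r)) r :=
    (hd (r^2)).hasDerivAt.comp r hsq
  have e2 : HasDerivAt (fun r : ℝ => deriv ρ (r^2)) (deriv (deriv ρ) (r^2) * (2 * r)) r :=
    HasDerivAt.comp (h₂ := deriv ρ) r (hd1 (r^2)).hasDerivAt hsq
  have es : HasDerivAt (fun x : ℝ => √x) (√r / (2 * r)) r := by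
    refine (Real.hasDerivAt_sqrt hr.ne').congr_deriv ?_
    have := Real.sq_sqrt hr.le
    have h2 : √r ≠ 0 := (Real.sqrt_pos.2 hr).ne'
    field_simp
    linarith
  have el : HasDerivAt (fun x : ℝ => 2 * x) 2 r := by
    simpa using (hasDerivAt_id r).const_mul (2:ℝ)
  have hr0 := hr.ne'
  constructor
  · refine (es.mul e1).congr_deriv ?_
    field_simp
  · refine (es.mul ((e1.div el (by positivity)).add (el.mul e2))).congr_deriv ?_
    simp only [Pi.add_apply, Pi.mul_apply, Pi.div_apply]
    field_simp
    ring

/-- The commutator pairing on the cone of angle `4π`: for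
`ζ(r,θ) = √r e^{iθ/2} ρ(r²)` with `ρ` a smooth compactly supported cutoff equal to `1`
near `0`, one has `∫₀^{4π} ∫₀^∞ (Δζ)(r,θ) (∂_w ζ)(r,θ) r dr dθ = -π`, where
`Δζ = ∂_r²ζ + r⁻¹∂_rζ + r⁻²∂_θ²ζ`, `∂_wζ = (e^{-iθ}/2)(∂_rζ - (i/r)∂_θζ)`, and the
product is the bilinear (unconjugated) one. -/
theorem commutator_pairing_cone_4pi (ρ : ℝ → ℝ)
    (hρ : ContDiff ℝ (⊤ : ℕ∞) ρ) (hcs : HasCompactSupport ρ)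
    (h1 : ∀ᶠ x in 𝓝 (0:ℝ), ρ x = 1)
    (ζ : ℝ → ℝ → ℂ)
    (hζ : ζ = fun r θ : ℝ =>
      (Real.sqrt r : ℂ) * Complex.exp (Complex.I * (θ : ℂ) / 2) * ((ρ (r ^ 2) : ℝ) : ℂ)) :
    ∫ θ in (0:ℝ)..(4 * π), ∫ r in Set.Ioi (0:ℝ),
      (deriv (deriv (fun x : ℝ => ζ x θ)) r
        + (r : ℂ)⁻¹ * deriv (fun x : ℝ => ζ x θ) r
        + ((r : ℂ) ^ 2)⁻¹ * deriv (deriv (fun y : ℝ => ζ r y)) θ) *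
      ((Complex.exp (-(Complex.I * (θ : ℂ))) / 2) *
        (deriv (fun x : ℝ => ζ x θ) r
          - (Complex.I / (r : ℂ)) * deriv (fun y : ℝ => ζ r y) θ)) *
      (r : ℂ) = -(π : ℂ) := by
  have h0 : ρ 0 = 1 := h1.self_of_nhds
  have inner : ∀ θ : ℝ, (∫ r in Set.Ioi (0:ℝ),
      (deriv (deriv (fun x : ℝ => ζ x θ)) r
        + (r : ℂ)⁻¹ * deriv (fun x : ℝ => ζ x θ) r
        + ((r : ℂ) ^ 2)⁻¹ * deriv (deriv (fun y : ℝ => ζ r y)) θ) *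
      ((Complex.exp (-(Complex.I * (θ : ℂ))) / 2) *
        (deriv (fun x : ℝ => ζ x θ) r
          - (Complex.I / (r : ℂ)) * deriv (fun y : ℝ => ζ r y) θ)) *
      (r : ℂ)) = ((-(1/4) : ℝ) : ℂ) := by
    intro θ
    rw [← aux_integral ρ hρ hcs h0, ← integral_complex_ofReal]
    refine setIntegral_congr_fun measurableSet_Ioi fun r hr => ?_
    have hr : 0 < r := hr
    set E : ℂ := Complex.exp (Complex.I * (θ : ℂ) / 2) with hE
    have hζx : (fun x : ℝ => ζ x θ) = fun x : ℝ => E * ((√x * ρ (x^2) : ℝ) : ℂ) := by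
      funext x; rw [hζ]; push_cast; ring
    have d1 : ∀ x : ℝ, 0 < x → deriv (fun x : ℝ => ζ x θ) x =
        E * ((√x * (ρ (x^2) / (2 * x) + 2 * x * deriv ρ (x^2)) : ℝ) : ℂ) := by
      intro x hx
      rw [hζx]
      exact ((aux_g ρ hρ x hx).1.ofReal_comp.const_mul E).deriv
    have d2 : deriv (deriv (fun x : ℝ => ζ x θ)) r =
        E * ((√r * (-ρ (r^2) / (4 * r^2) + 4 * deriv ρ (r^2)
        + 4 * r^2 * deriv (deriv ρ) (r^2)) : ℝ) : ℂ) := by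
      have : deriv (fun x : ℝ => ζ x θ) =ᶠ[𝓝 r] fun x : ℝ =>
          E * ((√x * (ρ (x^2) / (2 * x) + 2 * x * deriv ρ (x^2)) : ℝ) : ℂ) := by
        filter_upwards [lt_mem_nhds hr] with x hx using d1 x hx
      rw [this.deriv_eq]
      exact ((aux_g ρ hρ r hr).2.ofReal_comp.const_mul E).deriv
    have hexp : ∀ y : ℝ, HasDerivAt (fun y : ℝ => Complex.exp (Complex.I * (y : ℂ) / 2))
        (Complex.I / 2 * Complex.exp (Complex.I * (y : ℂ) / 2)) y := by
      intro y
      have a : HasDerivAt (fun y : ℝ => Complex.I * (y : ℂ) / 2) (Complex.I / 2) y := by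
        simpa using ((Complex.ofRealCLM.hasDerivAt (x := y)).const_mul Complex.I).div_const 2
      exact a.cexp.congr_deriv (mul_comm _ _)
    have t1 : deriv (fun y : ℝ => ζ r y) = fun y : ℝ =>
        (√r * ρ (r^2) : ℂ) * (Complex.I / 2) * Complex.exp (Complex.I * (y : ℂ) / 2) := by
      funext y
      rw [hζ]
      refine ((((hexp y).const_mul (√r : ℂ)).mul_const ((ρ (r^2) : ℝ) : ℂ)).congr_deriv ?_).deriv
      ring
    have t2 : deriv (deriv (fun y : ℝ => ζ r y)) θ =
        (√r * ρ (r^2) : ℂ) * (Complex.I / 2) * (Complex.I / 2 * E) := by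
      rw [t1]
      exact ((hexp θ).const_mul _).deriv
    have hEE : Complex.exp (-(Complex.I * (θ : ℂ))) = (E ^ 2)⁻¹ := by
      rw [Complex.exp_neg, hE, ← Complex.exp_nat_mul]
      congr 2
      push_cast; ring
    have hE0 : E ≠ 0 := Complex.exp_ne_zero _
    have hs : (√r : ℂ) ^ 2 = r := by exact_mod_cast congrArg Complex.ofReal (Real.sq_sqrt hr.le)
    have hrc : (r : ℂ) ≠ 0 := by exact_mod_cast hr.ne'
    have t1' := congrFun t1 θ
    simp only [← hE] at t1'
    show _ = ((_ : ℝ) : ℂ)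
    rw [d2, d1 r hr, t2, t1', hEE]
    push_cast
    generalize ((ρ (r^2) : ℝ) : ℂ) = p
    generalize ((deriv ρ (r^2) : ℝ) : ℂ) = p1
    generalize ((deriv (deriv ρ) (r^2) : ℝ) : ℂ) = p2
    have hA : E * (√r * (-p / (4 * (r:ℂ)^2) + 4 * p1 + 4 * (r:ℂ)^2 * p2))
        + (r:ℂ)⁻¹ * (E * (√r * (p / (2 * r) + 2 * r * p1)))
        + ((r:ℂ)^2)⁻¹ * (√r * p * (Complex.I / 2) * (Complex.I / 2 * E))
        = E * √r * (6 * p1 + 4 * (r:ℂ)^2 * p2) := by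
      field_simp
      ring_nf
      simp only [Complex.I_sq]
      ring
    have hB : E * (√r * (p / (2 * r) + 2 * r * p1))
        - Complex.I / r * (√r * p * (Complex.I / 2) * E)
        = E * √r * (p / r + 2 * r * p1) := by
      field_simp
      ring_nf
      simp only [Complex.I_sq]
      ring
    rw [hA, hB]
    have : E * √r * (6 * p1 + 4 * (r:ℂ)^2 * p2) *
        ((E^2)⁻¹ / 2 * (E * √r * (p / r + 2 * r * p1))) * r
        = (√r : ℂ)^2 * ((6 * p1 + 4 * (r:ℂ)^2 * p2) * (p / r + 2 * r * p1) * r / 2) := by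
      field_simp
    rw [this, hs]
    field_simp
  simp_rw [inner]
  rw [intervalIntegral.integral_const]
  simp only [sub_zero, Complex.real_smul]
  push_cast
  ring
end

section
/- Let ν ≥ 1 be a real number and let u : (0,∞) → ℂ be twice continuously differentiable and satisfy the modified Bessel equation s²u''(s) + su'(s) − (s² + ν²)u(s) = 0 for all s > 0. If ∫_0^∞ |u(s)|² s ds < ∞, then u(s) = 0 for all s > 0. -/
open Real Filter Topology MeasureTheory

lemma bessel_aux (ν : ℝ) (hν : 1 ≤ ν) (A B C : ℝ → ℝ)
    (hA0 : ∀ s, 0 ≤ A s) (hC0 : ∀ s, 0 ≤ C s)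
    (hA : ∀ s, 0 < s → HasDerivAt A (B s / s) s)
    (hB : ∀ s, 0 < s → HasDerivAt B ((2 * (s ^ 2 + ν ^ 2) * A s + 2 * C s) / s) s)
    (hC : ∀ s, 0 < s → HasDerivAt C ((s ^ 2 + ν ^ 2) * B s / s) s)
    (hint : IntegrableOn (fun s : ℝ => A s * s) (Set.Ioi 0)) (s₀ : ℝ) (hs₀ : 0 < s₀) :
    A s₀ = 0 := by
  by_contra hne
  have hApos : 0 < A s₀ := lt_of_le_of_ne (hA0 _) (Ne.symm hne)
  have hBmono : MonotoneOn B (Set.Ioi 0) := by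
    apply monotoneOn_of_hasDerivWithinAt_nonneg (convex_Ioi 0)
      (f' := fun s => (2 * (s ^ 2 + ν ^ 2) * A s + 2 * C s) / s)
    · exact fun s hs => (hB s hs).continuousAt.continuousWithinAt
    · intro s hs
      rw [interior_Ioi] at hs
      exact (hB s hs).hasDerivWithinAt
    · intro s hs
      rw [interior_Ioi] at hs
      have h1 := hA0 s
      have h2 := hC0 s
      have h3 : 0 < s := hs
      positivity
  rcases le_or_gt 0 (B s₀) with hB0 | hB0
  · have hAmono : MonotoneOn A (Set.Ici s₀) := by
      apply monotoneOn_of_hasDerivWithinAt_nonneg (convex_Ici s₀) (f' := fun s => B s / s)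
      · exact fun s hs => (hA s (hs₀.trans_le hs)).continuousAt.continuousWithinAt
      · intro s hs
        rw [interior_Ici] at hs
        exact (hA s (hs₀.trans hs)).hasDerivWithinAt
      · intro s hs
        rw [interior_Ici] at hs
        have h3 : 0 < s := hs₀.trans hs
        have : B s₀ ≤ B s := hBmono hs₀ h3 (le_of_lt hs)
        exact div_nonneg (hB0.trans this) h3.le
    have h1 : IntegrableOn (fun s : ℝ => A s * s) (Set.Ioi s₀) :=
      hint.mono_set (Set.Ioi_subset_Ioi hs₀.le)
    have h2 : IntegrableOn (fun _ : ℝ => A s₀ * s₀) (Set.Ioi s₀) := by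
      refine Integrable.mono' h1 aestronglyMeasurable_const ?_
      refine (ae_restrict_iff' measurableSet_Ioi).2 (Eventually.of_forall ?_)
      intro s hs
      have h3 : A s₀ ≤ A s := hAmono (Set.mem_Ici.2 le_rfl) (Set.mem_Ici.2 (le_of_lt hs)) (le_of_lt hs)
      rw [Real.norm_of_nonneg (by positivity)]
      exact mul_le_mul h3 (le_of_lt hs) hs₀.le (hA0 s)
    rw [integrableOn_const_iff] at h2
    rcases h2 with h2 | h2
    · have : 0 < A s₀ * s₀ := by positivity
      simp at h2
      rcases h2 with h2 | h2 <;> linarith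
    · simp at h2
  · have hBneg : ∀ s, 0 < s → s ≤ s₀ → B s < 0 := fun s h1 h2 => (hBmono h1 hs₀ h2).trans_lt hB0
    have hν2 : 1 ≤ ν ^ 2 := by nlinarith
    have mono : ∀ F F' : ℝ → ℝ, (∀ s, 0 < s → HasDerivAt F (F' s) s) →
        (∀ s, 0 < s → s ≤ s₀ → 0 ≤ F' s) → ∀ s, 0 < s → s ≤ s₀ → F s ≤ F s₀ := by
      intro F F' hF hF' s h1 h2
      have : MonotoneOn F (Set.Ioc 0 s₀) := by
        apply monotoneOn_of_hasDerivWithinAt_nonneg (convex_Ioc 0 s₀) (f' := F')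
        · exact fun s hs => (hF s hs.1).continuousAt.continuousWithinAt
        · intro s hs
          exact (hF s (interior_subset hs).1).hasDerivWithinAt
        · intro s hs
          exact hF' s (interior_subset hs).1 (interior_subset hs).2
      exact this ⟨h1, h2⟩ ⟨hs₀, le_rfl⟩ h2
    obtain ⟨c, hc, hQ⟩ : ∃ c, 0 < c ∧ ∀ s, 0 < s → s ≤ s₀ → c ≤ s ^ 2 * (A s - B s + C s) := by
      refine ⟨s₀ ^ 2 * (A s₀ - B s₀ + C s₀), ?_, ?_⟩
      · have := hC0 s₀
        have : 0 < A s₀ - B s₀ + C s₀ := by linarith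
        positivity
      · intro s h1 h2
        have := mono (fun s => -(s ^ 2 * (A s - B s + C s)))
          (fun s => s * ((s ^ 2 + ν ^ 2 - 1) * (2 * A s - B s))) ?_ ?_ s h1 h2
        · simpa using this
        · intro s hs
          refine ((((hasDerivAt_id s).pow 2).mul
            (((hA s hs).sub (hB s hs)).add (hC s hs))).neg).congr_deriv ?_
          simp
          field_simp
          ring
        · intro s h1 h2
          have h3 := hBneg s h1 h2
          have h4 := hA0 s
          have h5 : 0 ≤ 2 * A s - B s := by linarith
          have h6 : 0 ≤ s ^ 2 + ν ^ 2 - 1 := by nlinarith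
          positivity
    obtain ⟨M, hM⟩ : ∃ M, ∀ s, 0 < s → s ≤ s₀ → B s / s ^ 2 + c / 2 / s ^ 4 ≤ M := by
      refine ⟨_, mono (fun s => B s / s ^ 2 + c / 2 / s ^ 4)
        (fun s => (2 * (s ^ 2 + ν ^ 2) * A s + 2 * C s - 2 * B s - 2 * c / s ^ 2) / s ^ 3) ?_ ?_⟩
      · intro s hs
        refine (((hB s hs).div ((hasDerivAt_id s).pow 2) (by simp; positivity)).add
          ((hasDerivAt_const s (c / 2)).div ((hasDerivAt_id s).pow 4)
            (by simp; positivity))).congr_deriv ?_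
        simp
        field_simp
        ring
      · intro s h1 h2
        have h3 := hQ s h1 h2
        have h4 : c / s ^ 2 ≤ A s - B s + C s := by
          rw [div_le_iff₀ (by positivity)]; linarith
        have h5 := hA0 s
        have h6 : 0 ≤ (s ^ 2 + ν ^ 2 - 1) * A s := mul_nonneg (by nlinarith) h5
        apply div_nonneg _ (by positivity)
        rw [mul_div_assoc]
        nlinarith
    obtain ⟨N, hN⟩ : ∃ N, ∀ s, 0 < s → s ≤ s₀ → -(A s - M / 2 * s ^ 2 - c / 4 / s ^ 2) ≤ N := by
      refine ⟨_, mono (fun s => -(A s - M / 2 * s ^ 2 - c / 4 / s ^ 2))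
        (fun s => s * (M - (B s / s ^ 2 + c / 2 / s ^ 4))) ?_ ?_⟩
      · intro s hs
        refine ((((hA s hs).sub (((hasDerivAt_id s).pow 2).const_mul (M / 2))).sub
          ((hasDerivAt_const s (c / 4)).div ((hasDerivAt_id s).pow 2)
            (by simp; positivity))).neg).congr_deriv ?_
        simp
        field_simp
        ring
      · intro s h1 h2
        exact mul_nonneg h1.le (sub_nonneg.2 (hM s h1 h2))
    have hlim : ∀ᶠ s : ℝ in 𝓝 0, c / 8 < c / 4 + M / 2 * s ^ 4 - N * s ^ 2 := by
      have : ContinuousAt (fun s : ℝ => c / 4 + M / 2 * s ^ 4 - N * s ^ 2) 0 := by fun_prop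
      apply this.eventually_const_lt
      simp
      linarith
    obtain ⟨ε, hε, hε'⟩ := Metric.eventually_nhds_iff.1 hlim
    obtain ⟨δ, hδ, hδ1, hδ2⟩ : ∃ δ, 0 < δ ∧ δ ≤ s₀ ∧ δ < ε :=
      ⟨min s₀ (ε / 2), by positivity, min_le_left _ _, (min_le_right _ _).trans_lt (by linarith)⟩
    have h1 : IntegrableOn (fun s : ℝ => A s * s) (Set.Ioc 0 δ) :=
      hint.mono_set Set.Ioc_subset_Ioi_self
    have h2 : IntegrableOn (fun s : ℝ => s⁻¹) (Set.Ioc 0 δ) := by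
      refine Integrable.mono' (h1.const_mul (8 / c)) (by fun_prop) ?_
      refine (ae_restrict_iff' measurableSet_Ioc).2 (Eventually.of_forall ?_)
      rintro s ⟨hs, hs'⟩
      have h3 := hε' (y := s) (by rw [Real.dist_eq, sub_zero, abs_of_pos hs]; linarith)
      have h4 := hN s hs (hs'.trans hδ1)
      have h5 : c / 8 ≤ A s * s ^ 2 := by
        have h6 : 0 ≤ (N + (A s - M / 2 * s ^ 2 - c / 4 / s ^ 2)) * s ^ 2 :=
          mul_nonneg (by linarith) (by positivity)
        have h7 : c / 4 / s ^ 2 * s ^ 2 = c / 4 := by field_simp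
        nlinarith
      rw [Real.norm_of_nonneg (by positivity), inv_le_iff_one_le_mul₀ hs]
      have : 8 / c * (A s * s) * s = (A s * s ^ 2) / (c / 8) := by field_simp
      rw [this, le_div_iff₀ (by positivity)]
      linarith
    rw [← intervalIntegrable_iff_integrableOn_Ioc_of_le hδ.le] at h2
    rw [intervalIntegrable_inv_iff] at h2
    rcases h2 with h2 | h2
    · exact hδ.ne h2
    · exact h2 (by simp)

/-- For `ν ≥ 1`, any twice continuously differentiable solution on `(0,∞)` of the
modified Bessel equation `s²u'' + su' - (s² + ν²)u = 0` that lies in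
`L²((0,∞), s ds)` vanishes identically. -/
theorem modified_bessel_L2_trivial_of_one_le_order (ν : ℝ) (hν : 1 ≤ ν) (u : ℝ → ℂ)
    (hu : ContDiffOn ℝ 2 u (Set.Ioi 0))
    (heq : ∀ s ∈ Set.Ioi (0:ℝ),
      (s : ℂ) ^ 2 * deriv (deriv u) s + (s : ℂ) * deriv u s
        - ((s : ℂ) ^ 2 + (ν : ℂ) ^ 2) * u s = 0)
    (hint : IntegrableOn (fun s : ℝ => ‖u s‖ ^ 2 * s) (Set.Ioi 0)) :
    ∀ s ∈ Set.Ioi (0:ℝ), u s = 0 := by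
  intro s₀ hs₀
  have hd1 : ∀ s : ℝ, 0 < s → HasDerivAt u (deriv u s) s := fun s hs =>
    ((hu.differentiableOn (by norm_num)).differentiableAt (isOpen_Ioi.mem_nhds hs)).hasDerivAt
  have hu' : ContDiffOn ℝ 1 (deriv u) (Set.Ioi 0) :=
    hu.deriv_of_isOpen isOpen_Ioi (by norm_num)
  have hd2 : ∀ s : ℝ, 0 < s → HasDerivAt (deriv u)
      (((s ^ 2 + ν ^ 2) / s ^ 2) • u s - s⁻¹ • deriv u s) s := fun s hs => by
    have h := ((hu'.differentiableOn (by norm_num)).differentiableAt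
      (isOpen_Ioi.mem_nhds hs)).hasDerivAt
    refine h.congr_deriv ?_
    have h1 := heq s hs
    have h2 : (s : ℂ) ≠ 0 := by exact_mod_cast hs.ne'
    rw [Complex.real_smul, Complex.real_smul]
    push_cast
    field_simp
    linear_combination h1
  have key := bessel_aux ν hν (fun s => ‖u s‖ ^ 2) (fun s => 2 * s * inner ℝ (u s) (deriv u s))
    (fun s => s ^ 2 * ‖deriv u s‖ ^ 2) (fun s => by positivity) (fun s => by positivity)
    ?_ ?_ ?_ hint s₀ hs₀
  · simpa using key
  · intro s hs
    refine (hd1 s hs).norm_sq.congr_deriv ?_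
    field_simp
  · intro s hs
    refine ((((hasDerivAt_id s).const_mul 2)).mul
      ((hd1 s hs).inner ℝ (hd2 s hs))).congr_deriv ?_
    simp only [inner_sub_right, real_inner_smul_right, real_inner_self_eq_norm_sq, id]
    field_simp
    ring
  · intro s hs
    refine (((hasDerivAt_id s).pow 2).mul (hd2 s hs).norm_sq).congr_deriv ?_
    simp only [inner_sub_right, real_inner_smul_right, real_inner_self_eq_norm_sq, id]
    rw [real_inner_comm (u s) (deriv u s)]
    simp
    field_simp
    ring
end

section
/- Let u, v : (0,∞) → ℂ be twice continuously differentiable solutions of the modified Bessel equation of order 0, i.e. s²w''(s) + sw'(s) − s²w(s) = 0 for all s > 0, and suppose ∫_0^∞ |u(s)|² s ds < ∞ and ∫_0^∞ |v(s)|² s ds < ∞. Then u and v are linearly dependent: there exist (a,b) ∈ ℂ² with (a,b) ≠ (0,0) and a·u(s) + b·v(s) = 0 for all s > 0. (The space of L²((0,∞), s ds) solutions of the order-zero modified Bessel equation is at most one-dimensional; it is spanned by K_0.) -/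
open Real Filter Topology MeasureTheory

theorem bessel_aux_s7 (w w1 w2 : ℝ → ℂ) (c : ℝ) (hc : 0 < c)
    (h1 : ∀ s, 0 < s → HasDerivAt w (w1 s) s)
    (h2 : ∀ s, 0 < s → HasDerivAt w1 (w2 s) s)
    (he : ∀ s, 0 < s → s • w2 s = s • w s - w1 s)
    (hint : IntegrableOn (fun s : ℝ => ‖w s‖ ^ 2 * s) (Set.Ioi 0))
    (h0 : w c = 0) : ∀ s, c ≤ s → w s = 0 := by
  have hp : ∀ s, 0 < s → HasDerivAt (fun s => s * inner ℝ (w s) (w1 s))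
      (s * (‖w s‖ ^ 2 + ‖w1 s‖ ^ 2)) s := by
    intro s hs
    have h := (hasDerivAt_id s).mul ((h1 s hs).inner ℝ (h2 s hs))
    refine h.congr_deriv ?_
    have e : s * inner ℝ (w s) (w2 s) = s * ‖w s‖ ^ 2 - inner ℝ (w s) (w1 s) := by
      rw [← real_inner_smul_right, he s hs, inner_sub_right, real_inner_smul_right,
        real_inner_self_eq_norm_sq]
    simp only [id, real_inner_self_eq_norm_sq]
    linarith
  have hpm : MonotoneOn (fun s => s * inner ℝ (w s) (w1 s)) (Set.Ici c) := by
    apply monotoneOn_of_deriv_nonneg (convex_Ici c)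
    · intro s hs
      exact (hp s (hc.trans_le hs)).continuousAt.continuousWithinAt
    · intro s hs
      rw [interior_Ici] at hs
      exact (hp s (hc.trans hs)).differentiableAt.differentiableWithinAt
    · intro s hs
      rw [interior_Ici] at hs
      have hs' : 0 < s := hc.trans hs
      rw [(hp s hs').deriv]
      positivity
  have hpn : ∀ s, c ≤ s → 0 ≤ inner ℝ (w s) (w1 s) := by
    intro s hs
    have := hpm (Set.self_mem_Ici) hs hs
    simp only [h0, inner_zero_left, mul_zero] at this
    exact nonneg_of_mul_nonneg_right this (hc.trans_le hs)
  have hg : ∀ s, 0 < s → HasDerivAt (fun s => ‖w s‖ ^ 2) (2 * inner ℝ (w s) (w1 s)) s :=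
    fun s hs => (h1 s hs).norm_sq
  have hgm : MonotoneOn (fun s => ‖w s‖ ^ 2) (Set.Ici c) := by
    apply monotoneOn_of_deriv_nonneg (convex_Ici c)
    · intro s hs
      exact (hg s (hc.trans_le hs)).continuousAt.continuousWithinAt
    · intro s hs
      rw [interior_Ici] at hs
      exact (hg s (hc.trans hs)).differentiableAt.differentiableWithinAt
    · intro s hs
      rw [interior_Ici] at hs
      rw [(hg s (hc.trans hs)).deriv]
      have := hpn s (le_of_lt hs)
      positivity
  intro s hs
  by_contra hne
  have hs0 : 0 < s := hc.trans_le hs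
  have hpos : 0 < ‖w s‖ ^ 2 * s := by positivity
  have hi : IntegrableOn (fun _ : ℝ => ‖w s‖ ^ 2 * s) (Set.Ioi s) := by
    refine Integrable.mono' (hint.mono_set (Set.Ioi_subset_Ioi hs0.le))
      aestronglyMeasurable_const ?_
    filter_upwards [ae_restrict_mem measurableSet_Ioi] with t ht
    rw [Real.norm_of_nonneg hpos.le]
    have ht' : s < t := ht
    have := hgm (Set.mem_Ici.2 hs) (Set.mem_Ici.2 (hs.trans ht'.le)) ht'.le
    exact mul_le_mul this ht'.le hs0.le (by positivity)
  rw [integrableOn_const_iff] at hi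
  rcases hi with hi | hi
  · exact hpos.ne' (enorm_eq_zero.1 hi)
  · simp at hi

theorem bessel_derivs (u : ℝ → ℂ) (hu : ContDiffOn ℝ 2 u (Set.Ioi 0)) (s : ℝ) (hs : 0 < s) :
    HasDerivAt u (deriv u s) s ∧ HasDerivAt (deriv u) (deriv (deriv u) s) s := by
  have hmem : Set.Ioi (0:ℝ) ∈ 𝓝 s := Ioi_mem_nhds hs
  refine ⟨((hu.contDiffAt hmem).differentiableAt (by norm_num)).hasDerivAt, ?_⟩
  have h : ContDiffOn ℝ 1 (deriv u) (Set.Ioi 0) := hu.deriv_of_isOpen isOpen_Ioi (by norm_num)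
  exact ((h.contDiffAt hmem).differentiableAt (by norm_num)).hasDerivAt

/-- The space of `L²((0,∞), s ds)` solutions of the modified Bessel equation of order
`0`, `s²w'' + sw' - s²w = 0`, is at most one-dimensional: any two twice continuously
differentiable square-integrable solutions are linearly dependent. -/
theorem modified_bessel_zero_L2_solutions_dependent (u v : ℝ → ℂ)
    (hu : ContDiffOn ℝ 2 u (Set.Ioi 0))
    (hv : ContDiffOn ℝ 2 v (Set.Ioi 0))
    (hequ : ∀ s ∈ Set.Ioi (0:ℝ),
      (s : ℂ) ^ 2 * deriv (deriv u) s + (s : ℂ) * deriv u s - (s : ℂ) ^ 2 * u s = 0)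
    (heqv : ∀ s ∈ Set.Ioi (0:ℝ),
      (s : ℂ) ^ 2 * deriv (deriv v) s + (s : ℂ) * deriv v s - (s : ℂ) ^ 2 * v s = 0)
    (hintu : IntegrableOn (fun s : ℝ => ‖u s‖ ^ 2 * s) (Set.Ioi 0))
    (hintv : IntegrableOn (fun s : ℝ => ‖v s‖ ^ 2 * s) (Set.Ioi 0)) :
    ∃ a b : ℂ, (a, b) ≠ (0, 0) ∧ ∀ s ∈ Set.Ioi (0:ℝ), a * u s + b * v s = 0 := by
  have key : ∀ c, 0 < c → ∀ s, c ≤ s → v c * u s - u c * v s = 0 := by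
    intro c hc
    refine bessel_aux_s7 (fun s => v c * u s - u c * v s)
      (fun s => v c * deriv u s - u c * deriv v s)
      (fun s => v c * deriv (deriv u) s - u c * deriv (deriv v) s) c hc ?_ ?_ ?_ ?_ ?_
    · intro s hs
      exact ((bessel_derivs u hu s hs).1.const_mul _).sub ((bessel_derivs v hv s hs).1.const_mul _)
    · intro s hs
      exact ((bessel_derivs u hu s hs).2.const_mul _).sub ((bessel_derivs v hv s hs).2.const_mul _)
    · intro s hs
      have hs' : (s : ℂ) ≠ 0 := by exact_mod_cast hs.ne'
      have e1 := hequ s hs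
      have e2 := heqv s hs
      simp only [Complex.real_smul]
      apply mul_left_cancel₀ hs'
      linear_combination v c * e1 - u c * e2
    · have hd : IntegrableOn (fun s : ℝ => 2 * ‖v c‖ ^ 2 * (‖u s‖ ^ 2 * s)
          + 2 * ‖u c‖ ^ 2 * (‖v s‖ ^ 2 * s)) (Set.Ioi 0) :=
        (hintu.const_mul _).add (hintv.const_mul _)
      refine Integrable.mono' hd ?_ ?_
      · apply ContinuousOn.aestronglyMeasurable _ measurableSet_Ioi
        have := hu.continuousOn
        have := hv.continuousOn
        fun_prop
      · filter_upwards [ae_restrict_mem measurableSet_Ioi] with t ht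
        have ht' : 0 < t := ht
        rw [Real.norm_of_nonneg (by positivity)]
        have h := norm_sub_le (v c * u t) (u c * v t)
        rw [norm_mul, norm_mul] at h
        have h3 : ‖v c * u t - u c * v t‖ ^ 2 ≤
            2 * (‖v c‖ * ‖u t‖) ^ 2 + 2 * (‖u c‖ * ‖v t‖) ^ 2 := by
          have := pow_le_pow_left₀ (norm_nonneg _) h 2
          nlinarith [sq_nonneg (‖v c‖ * ‖u t‖ - ‖u c‖ * ‖v t‖)]
        have := mul_le_mul_of_nonneg_right h3 ht'.le
        linarith
    · exact sub_eq_zero.2 (mul_comm _ _)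
  by_cases hz : ∀ s ∈ Set.Ioi (0:ℝ), u s = 0
  · exact ⟨1, 0, by simp, fun s hs => by simp [hz s hs]⟩
  · push Not at hz
    obtain ⟨c, hc, hne⟩ := hz
    refine ⟨v c, -u c, by simp [hne], fun s hs => ?_⟩
    rcases le_total c s with h | h
    · linear_combination key c hc s h
    · linear_combination -key s hs c h
end

section
/- In the configuration below, let t > 0 with t ≠ r₁ + r₂ and t ≠ D. Then the set S = {s > 0 : f(s) = t} is finite, sin θ₁(s) + sin θ₂(s) ≠ 0 for every s ∈ S, and: if x₁y₂ − x₂y₁ > 0 then S has 0 elements when t < D, exactly 2 elements when D < t < r₁ + r₂, and exactly 1 element when t > r₁ + r₂; if x₁y₂ − x₂y₁ ≤ 0 then S is empty when t < r₁ + r₂ and has exactly 1 element when t > r₁ + r₂. -/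
open Real

theorem aux_cs (c p q : ℝ) (hc : c ≠ 0) (hpq : p ≠ q) :
    c ^ 2 + p * q < Real.sqrt (c ^ 2 + p ^ 2) * Real.sqrt (c ^ 2 + q ^ 2) := by
  rw [← Real.sqrt_mul (by positivity)]
  apply Real.lt_sqrt_of_sq_lt
  have h1 : 0 < c ^ 2 := by positivity
  have h2 : 0 < (p - q) ^ 2 := by
    have := sub_ne_zero.mpr hpq
    positivity
  nlinarith [mul_pos h1 h2]

theorem aux_mid (c y p q : ℝ) (a b : ℝ) (hc : c ≠ 0) (hpq : p ≠ q) (ha : 0 < a) (hb : 0 < b)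
    (hab : a + b = 1) :
    Real.sqrt (c ^ 2 + (y - (a * p + b * q)) ^ 2) <
      a * Real.sqrt (c ^ 2 + (y - p) ^ 2) + b * Real.sqrt (c ^ 2 + (y - q) ^ 2) := by
  have h := aux_cs c (y - p) (y - q) hc (by intro h; apply hpq; linarith)
  have hu := Real.sq_sqrt (show 0 ≤ c ^ 2 + (y - p) ^ 2 by positivity)
  have hv := Real.sq_sqrt (show 0 ≤ c ^ 2 + (y - q) ^ 2 by positivity)
  have hu0 := Real.sqrt_nonneg (c ^ 2 + (y - p) ^ 2)
  have hv0 : 0 < Real.sqrt (c ^ 2 + (y - q) ^ 2) := Real.sqrt_pos.mpr (by positivity)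
  set u := Real.sqrt (c ^ 2 + (y - p) ^ 2)
  set v := Real.sqrt (c ^ 2 + (y - q) ^ 2)
  rw [Real.sqrt_lt' (by positivity)]
  have hm := mul_lt_mul_of_pos_left h (mul_pos ha hb)
  have hb' : b = 1 - a := by linarith
  have e : (a * u + b * v) ^ 2 = a ^ 2 * u ^ 2 + b ^ 2 * v ^ 2 + 2 * (a * b * (u * v)) := by ring
  rw [e, hu, hv]
  subst hb'
  nlinarith [hm]

theorem aux_tri (x₁ p x₂ q : ℝ) :
    Real.sqrt ((x₁ - x₂) ^ 2 + (p - q) ^ 2) ≤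
      Real.sqrt (x₁ ^ 2 + p ^ 2) + Real.sqrt (x₂ ^ 2 + q ^ 2) := by
  have hu := Real.sq_sqrt (show 0 ≤ x₁ ^ 2 + p ^ 2 by positivity)
  have hv := Real.sq_sqrt (show 0 ≤ x₂ ^ 2 + q ^ 2 by positivity)
  have h : -(x₁ * x₂ + p * q) ≤ Real.sqrt (x₁ ^ 2 + p ^ 2) * Real.sqrt (x₂ ^ 2 + q ^ 2) := by
    rw [← Real.sqrt_mul (by positivity)]
    apply Real.le_sqrt_of_sq_le
    nlinarith [sq_nonneg (x₁ * q - x₂ * p)]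
  rw [Real.sqrt_le_left (by positivity)]
  nlinarith

/-- Counting the roots of `f(s) = r₁(s) + r₂(s) = t` in the moving-conical-point
representation of the sine wave kernel on `C_{4π}`. Here `q₁ = (x₁,y₁)` with
`x₁ > 0`, `q₂ = (x₂,y₂)` with `x₂ < 0`, `p(s) = (0,s)`, `rᵢ(s) = ‖qᵢ - p(s)‖`,
`θ₁(s) ∈ (-π/2, π/2)` and `θ₂(s) ∈ (π/2, 3π/2)` are the polar angles of
`qᵢ - p(s)`, `D = ‖q₁ - q₂‖`, and `S = {s > 0 : f(s) = t}`. -/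
theorem moving_cone_point_root_count
    (x₁ y₁ x₂ y₂ : ℝ) (hx₁ : 0 < x₁) (hx₂ : x₂ < 0)
    (r₁ r₂ : ℝ → ℝ)
    (hr₁ : r₁ = fun s : ℝ => Real.sqrt (x₁ ^ 2 + (y₁ - s) ^ 2))
    (hr₂ : r₂ = fun s : ℝ => Real.sqrt (x₂ ^ 2 + (y₂ - s) ^ 2))
    (θ₁ θ₂ : ℝ → ℝ)
    (hθ₁ : ∀ s : ℝ, 0 ≤ s → θ₁ s ∈ Set.Ioo (-(π / 2)) (π / 2) ∧
      x₁ = r₁ s * Real.cos (θ₁ s) ∧ y₁ - s = r₁ s * Real.sin (θ₁ s))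
    (hθ₂ : ∀ s : ℝ, 0 ≤ s → θ₂ s ∈ Set.Ioo (π / 2) (3 * π / 2) ∧
      x₂ = r₂ s * Real.cos (θ₂ s) ∧ y₂ - s = r₂ s * Real.sin (θ₂ s))
    (D : ℝ) (hD : D = Real.sqrt ((x₁ - x₂) ^ 2 + (y₁ - y₂) ^ 2))
    (f : ℝ → ℝ) (hf : f = fun s : ℝ => r₁ s + r₂ s)
    (t : ℝ) (ht : 0 < t) (ht₁ : t ≠ r₁ 0 + r₂ 0) (ht₂ : t ≠ D)
    (S : Set ℝ) (hS : S = {s : ℝ | 0 < s ∧ f s = t}) :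
    S.Finite ∧
    (∀ s ∈ S, Real.sin (θ₁ s) + Real.sin (θ₂ s) ≠ 0) ∧
    (0 < x₁ * y₂ - x₂ * y₁ →
      (t < D → S = ∅) ∧
      (D < t → t < r₁ 0 + r₂ 0 → S.ncard = 2) ∧
      (r₁ 0 + r₂ 0 < t → S.ncard = 1)) ∧
    (x₁ * y₂ - x₂ * y₁ ≤ 0 →
      (t < r₁ 0 + r₂ 0 → S = ∅) ∧
      (r₁ 0 + r₂ 0 < t → S.ncard = 1)) := by
  have hD0 : 0 ≤ D := by rw [hD]; positivity
  have hDsq : D ^ 2 = (x₁ - x₂) ^ 2 + (y₁ - y₂) ^ 2 := by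
    rw [hD]; exact Real.sq_sqrt (by positivity)
  have hw : 0 < x₁ - x₂ := by linarith
  obtain ⟨m, hm⟩ : ∃ m, m = (x₁ * y₂ - x₂ * y₁) / (x₁ - x₂) := ⟨_, rfl⟩
  have hfD : ∀ s, D ≤ f s := by
    intro s
    have h := aux_tri x₁ (y₁ - s) x₂ (y₂ - s)
    rw [hD, hf, hr₁, hr₂]
    simpa using h
  have hfm : f m = D := by
    have e1 : Real.sqrt (x₁ ^ 2 + (y₁ - m) ^ 2) = x₁ / (x₁ - x₂) * D := by
      rw [Real.sqrt_eq_iff_mul_self_eq (by positivity) (by positivity)]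
      have : x₁ / (x₁ - x₂) * D * (x₁ / (x₁ - x₂) * D) = (x₁ / (x₁ - x₂)) ^ 2 * D ^ 2 := by ring
      rw [this, hDsq, hm]
      field_simp
      ring
    have e2 : Real.sqrt (x₂ ^ 2 + (y₂ - m) ^ 2) = (-x₂) / (x₁ - x₂) * D := by
      have : 0 < -x₂ := by linarith
      rw [Real.sqrt_eq_iff_mul_self_eq (by positivity) (by positivity)]
      have : (-x₂) / (x₁ - x₂) * D * ((-x₂) / (x₁ - x₂) * D)
          = ((-x₂) / (x₁ - x₂)) ^ 2 * D ^ 2 := by ring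
      rw [this, hDsq, hm]
      field_simp
      ring
    rw [hf, hr₁, hr₂]
    simp only
    rw [e1, e2]
    field_simp
    ring
  have hconv : ∀ p q a b : ℝ, p ≠ q → 0 < a → 0 < b → a + b = 1 →
      f (a * p + b * q) < a * f p + b * f q := by
    intro p q a b hpq ha hb hab
    have h1 := aux_mid x₁ y₁ p q a b hx₁.ne' hpq ha hb hab
    have h2 := aux_mid x₂ y₂ p q a b hx₂.ne hpq ha hb hab
    rw [hf, hr₁, hr₂]
    simp only
    linarith
  have hmin : ∀ s, s ≠ m → f m < f s := by
    intro s hs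
    have h := hconv s m (1/2) (1/2) hs (by norm_num) (by norm_num) (by norm_num)
    have := hfD (1/2 * s + 1/2 * m)
    linarith
  have hbet : ∀ a b c : ℝ, 0 < a → a < 1 → b ≠ m → c = a * m + (1 - a) * b → f c < f b := by
    intro a b c ha ha1 hb hc
    have h := hconv m b a (1 - a) hb.symm ha (by linarith) (by ring)
    rw [← hc] at h
    nlinarith [hmin b hb]
  have hmono : ∀ a b, m ≤ a → a < b → f a < f b := by
    intro a b hma hab
    rcases hma.eq_or_lt with h | h
    · rw [← h]; exact hmin b (by linarith)
    · have hp : 0 < b - m := by linarith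
      apply hbet ((b - a) / (b - m)) b a (div_pos (by linarith) hp)
        ((div_lt_one hp).mpr (by linarith)) (by linarith)
      field_simp
      ring
  have hanti : ∀ a b, a < b → b ≤ m → f b < f a := by
    intro a b hab hbm
    rcases hbm.eq_or_lt with h | h
    · rw [h]; exact hmin a (by linarith)
    · have hp : 0 < m - a := by linarith
      apply hbet ((b - a) / (m - a)) a b (div_pos (by linarith) hp)
        ((div_lt_one hp).mpr (by linarith)) (by linarith)
      field_simp
      ring
  have hcont : Continuous f := by
    rw [hf, hr₁, hr₂]; fun_prop
  have hinj1 : ∀ a b, m ≤ a → m ≤ b → f a = f b → a = b := by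
    intro a b ha hb h
    rcases lt_trichotomy a b with h' | h' | h'
    · linarith [hmono a b ha h']
    · exact h'
    · linarith [hmono b a hb h']
  have hinj2 : ∀ a b, a ≤ m → b ≤ m → f a = f b → a = b := by
    intro a b ha hb h
    rcases lt_trichotomy a b with h' | h' | h'
    · linarith [hanti a b h' hb]
    · exact h'
    · linarith [hanti b a h' ha]
  have hbig : ∀ s, s - y₁ ≤ f s := by
    intro s
    have h1 : |y₁ - s| ≤ Real.sqrt (x₁ ^ 2 + (y₁ - s) ^ 2) :=
      Real.abs_le_sqrt (by nlinarith [sq_nonneg x₁])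
    have h2 := neg_abs_le (y₁ - s)
    have h3 := Real.sqrt_nonneg (x₂ ^ 2 + (y₂ - s) ^ 2)
    rw [hf, hr₁, hr₂]
    simp only
    linarith
  have hroot : ∀ c, f c < t → ∃ b, c < b ∧ f b = t := by
    intro c hc
    have hM := hbig (|c| + |y₁| + t)
    have hMc : c ≤ |c| + |y₁| + t := by
      linarith [le_abs_self c, abs_nonneg y₁]
    obtain ⟨b, hb, hbt⟩ := intermediate_value_Icc hMc hcont.continuousOn
      (show t ∈ Set.Icc _ _ from ⟨hc.le, by linarith [abs_nonneg c, le_abs_self y₁]⟩)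
    refine ⟨b, lt_of_le_of_ne hb.1 ?_, hbt⟩
    rintro rfl
    linarith
  have hf0 : f 0 = r₁ 0 + r₂ 0 := by rw [hf]
  rw [← hf0] at ht₁ ⊢
  have hmem : ∀ s, s ∈ S ↔ 0 < s ∧ f s = t := by intro s; rw [hS]; rfl
  refine ⟨?_, ?_, ?_, ?_⟩
  · have h1 : (S ∩ Set.Ici m).Subsingleton := fun a ha b hb =>
      hinj1 a b ha.2 hb.2 (((hmem a).1 ha.1).2.trans ((hmem b).1 hb.1).2.symm)
    have h2 : (S ∩ Set.Iic m).Subsingleton := fun a ha b hb =>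
      hinj2 a b ha.2 hb.2 (((hmem a).1 ha.1).2.trans ((hmem b).1 hb.1).2.symm)
    refine (h1.finite.union h2.finite).subset fun s hs => ?_
    rcases le_total m s with h | h
    · exact Or.inl ⟨hs, h⟩
    · exact Or.inr ⟨hs, h⟩
  · intro s hs hsum
    obtain ⟨hs0, hst⟩ := (hmem s).1 hs
    obtain ⟨hm1, hc1, hs1⟩ := hθ₁ s hs0.le
    obtain ⟨hm2, hc2, hs2⟩ := hθ₂ s hs0.le
    have hp1 : 0 < Real.cos (θ₁ s) := Real.cos_pos_of_mem_Ioo hm1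
    have hp2 : Real.cos (θ₂ s) < 0 :=
      Real.cos_neg_of_pi_div_two_lt_of_lt hm2.1 (by linarith [hm2.2])
    have q1 := Real.sin_sq_add_cos_sq (θ₁ s)
    have q2 := Real.sin_sq_add_cos_sq (θ₂ s)
    have hsin : Real.sin (θ₂ s) = -Real.sin (θ₁ s) := by linarith
    have hcos : Real.cos (θ₂ s) = -Real.cos (θ₁ s) := by
      rw [hsin] at q2
      have : (Real.cos (θ₂ s) + Real.cos (θ₁ s)) * (Real.cos (θ₂ s) - Real.cos (θ₁ s)) = 0 := by
        nlinarith
      rcases mul_eq_zero.1 this with h | h <;> linarith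
    rw [hsin] at hs2
    rw [hcos] at hc2
    have ft : r₁ s + r₂ s = t := by rw [← hst, hf]
    have hx : x₁ - x₂ = t * Real.cos (θ₁ s) := by rw [← ft]; linarith
    have hy : y₁ - y₂ = t * Real.sin (θ₁ s) := by rw [← ft]; linarith
    apply ht₂
    have : t ^ 2 = D ^ 2 := by
      rw [hDsq, hx, hy]
      linear_combination (-t ^ 2) * q1
    exact (sq_eq_sq₀ ht.le hD0).1 this
  · intro hpos
    have hm0 : 0 < m := by rw [hm]; positivity
    refine ⟨?_, ?_, ?_⟩
    · intro h
      ext s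
      simp only [hmem, Set.mem_empty_iff_false, iff_false]
      rintro ⟨-, h2⟩
      linarith [hfD s]
    · intro h1 h2
      obtain ⟨b, hb, hbt⟩ := hroot m (by linarith)
      obtain ⟨a, ha, hat⟩ := intermediate_value_Icc' hm0.le hcont.continuousOn
        (show t ∈ Set.Icc _ _ from ⟨by linarith, h2.le⟩)
      have ha0 : 0 < a := by
        refine lt_of_le_of_ne ha.1 ?_
        rintro rfl
        linarith
      have : S = {a, b} := by
        ext s
        simp only [hmem, Set.mem_insert_iff, Set.mem_singleton_iff]
        constructor
        · rintro ⟨-, hst⟩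
          rcases le_total m s with h | h
          · exact Or.inr (hinj1 s b h hb.le (hst.trans hbt.symm))
          · exact Or.inl (hinj2 s a h ha.2 (hst.trans hat.symm))
        · rintro (rfl | rfl)
          · exact ⟨ha0, hat⟩
          · exact ⟨by linarith, hbt⟩
      rw [this, Set.ncard_pair]
      have := ha.2
      intro h
      linarith
    · intro h1
      obtain ⟨b, hb, hbt⟩ := hroot m (by linarith [hanti 0 m hm0 le_rfl])
      rw [Set.ncard_eq_one]
      refine ⟨b, ?_⟩
      ext s
      simp only [hmem, Set.mem_singleton_iff]
      constructor
      · rintro ⟨hs, hst⟩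
        rcases le_total m s with h | h
        · exact hinj1 s b h hb.le (hst.trans hbt.symm)
        · linarith [hanti 0 s hs h]
      · rintro rfl
        exact ⟨by linarith, hbt⟩
  · intro hneg
    have hm0 : m ≤ 0 := by rw [hm]; exact div_nonpos_of_nonpos_of_nonneg hneg hw.le
    refine ⟨?_, ?_⟩
    · intro h
      ext s
      simp only [hmem, Set.mem_empty_iff_false, iff_false]
      rintro ⟨h1, h2⟩
      linarith [hmono 0 s hm0 h1]
    · intro h1
      obtain ⟨b, hb, hbt⟩ := hroot 0 h1
      rw [Set.ncard_eq_one]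
      refine ⟨b, ?_⟩
      ext s
      simp only [hmem, Set.mem_singleton_iff]
      constructor
      · rintro ⟨hs, hst⟩
        exact hinj1 s b (by linarith) (by linarith) (hst.trans hbt.symm)
      · rintro rfl
        exact ⟨hb, hbt⟩
end

section
/- In the configuration below, suppose s ≥ 0 and set t = f(s); assume sin θ₁(s) + sin θ₂(s) ≠ 0. Then t > D and (r₁(s) r₂(s))^{−1/2} · sin( (θ₁(s) + θ₂(s))/2 ) / |sin θ₁(s) + sin θ₂(s)| = (t² − D²)^{−1/2}. -/
open Real

/-- Each transversal root of `f(s) = t` contributes the Cheeger–Taylor density: in the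
moving-conical-point configuration (`q₁ = (x₁,y₁)`, `x₁ > 0`; `q₂ = (x₂,y₂)`, `x₂ < 0`;
`p(s) = (0,s)`; `rᵢ(s) = ‖qᵢ - p(s)‖`; `θ₁(s) ∈ (-π/2,π/2)`, `θ₂(s) ∈ (π/2,3π/2)` the
polar angles of `qᵢ - p(s)`; `D = ‖q₁ - q₂‖`), if `s ≥ 0`, `t = r₁(s) + r₂(s)` and
`sin θ₁(s) + sin θ₂(s) ≠ 0`, then `t > D` and
`(r₁(s) r₂(s))^{-1/2} sin((θ₁(s)+θ₂(s))/2) / |sin θ₁(s) + sin θ₂(s)| = (t² - D²)^{-1/2}`. -/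
theorem moving_cone_point_density
    (x₁ y₁ x₂ y₂ : ℝ) (hx₁ : 0 < x₁) (hx₂ : x₂ < 0)
    (r₁ r₂ : ℝ → ℝ)
    (hr₁ : r₁ = fun s : ℝ => Real.sqrt (x₁ ^ 2 + (y₁ - s) ^ 2))
    (hr₂ : r₂ = fun s : ℝ => Real.sqrt (x₂ ^ 2 + (y₂ - s) ^ 2))
    (θ₁ θ₂ : ℝ → ℝ)
    (hθ₁ : ∀ s : ℝ, 0 ≤ s → θ₁ s ∈ Set.Ioo (-(π / 2)) (π / 2) ∧
      x₁ = r₁ s * Real.cos (θ₁ s) ∧ y₁ - s = r₁ s * Real.sin (θ₁ s))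
    (hθ₂ : ∀ s : ℝ, 0 ≤ s → θ₂ s ∈ Set.Ioo (π / 2) (3 * π / 2) ∧
      x₂ = r₂ s * Real.cos (θ₂ s) ∧ y₂ - s = r₂ s * Real.sin (θ₂ s))
    (D : ℝ) (hD : D = Real.sqrt ((x₁ - x₂) ^ 2 + (y₁ - y₂) ^ 2))
    (f : ℝ → ℝ) (hf : f = fun s : ℝ => r₁ s + r₂ s)
    (s : ℝ) (hs : 0 ≤ s) (t : ℝ) (htf : t = f s)
    (hsin : Real.sin (θ₁ s) + Real.sin (θ₂ s) ≠ 0) :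
    D < t ∧
    (Real.sqrt (r₁ s * r₂ s))⁻¹ *
        (Real.sin ((θ₁ s + θ₂ s) / 2) / |Real.sin (θ₁ s) + Real.sin (θ₂ s)|)
      = (Real.sqrt (t ^ 2 - D ^ 2))⁻¹ := by
  obtain ⟨⟨h1a, h1b⟩, hc1, hs1⟩ := hθ₁ s hs
  obtain ⟨⟨h2a, h2b⟩, hc2, hs2⟩ := hθ₂ s hs
  have hR1 : 0 < r₁ s := by
    rw [hr₁]; exact Real.sqrt_pos.mpr (by positivity)
  have hR2 : 0 < r₂ s := by
    rw [hr₂]; exact Real.sqrt_pos.mpr (by have := hx₂.ne; positivity)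
  have ht : t = r₁ s + r₂ s := by rw [htf, hf]
  clear hr₁ hr₂ hθ₁ hθ₂ htf hf
  generalize r₁ s = R1 at *
  generalize r₂ s = R2 at *
  generalize θ₁ s = A at *
  generalize θ₂ s = B at *
  have hsa : 0 < Real.sin ((A + B) / 2) :=
    Real.sin_pos_of_pos_of_lt_pi (by linarith) (by linarith)
  have hsum : Real.sin A + Real.sin B
      = 2 * Real.sin ((A + B) / 2) * Real.cos ((A - B) / 2) := by
    have hA : A = (A + B) / 2 + (A - B) / 2 := by ring
    have hB : B = (A + B) / 2 - (A - B) / 2 := by ring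
    have e1 := Real.sin_add ((A + B) / 2) ((A - B) / 2)
    have e2 := Real.sin_sub ((A + B) / 2) ((A - B) / 2)
    rw [← hA] at e1
    rw [← hB] at e2
    linarith
  have hcos : Real.cos A * Real.cos B + Real.sin A * Real.sin B
      = 2 * Real.cos ((A - B) / 2) ^ 2 - 1 := by
    rw [← Real.cos_sub, ← Real.cos_two_mul]; congr 1; ring
  have hcb : Real.cos ((A - B) / 2) ≠ 0 := by
    intro h; apply hsin; rw [hsum, h, mul_zero]
  have hD2 : D ^ 2 = (x₁ - x₂) ^ 2 + (y₁ - y₂) ^ 2 := by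
    rw [hD]; exact Real.sq_sqrt (by positivity)
  have hy : y₁ - y₂ = R1 * Real.sin A - R2 * Real.sin B := by linarith
  have key : t ^ 2 - D ^ 2 = (R1 * R2) * (2 * |Real.cos ((A - B) / 2)|) ^ 2 := by
    rw [hD2, hy, hc1, hc2, ht, mul_pow, sq_abs]
    linear_combination (-R1 ^ 2) * Real.sin_sq_add_cos_sq A
      - R2 ^ 2 * Real.sin_sq_add_cos_sq B + 2 * R1 * R2 * hcos
  have hcabs : 0 < |Real.cos ((A - B) / 2)| := abs_pos.mpr hcb
  constructor
  · have : 0 < t ^ 2 - D ^ 2 := by rw [key]; positivity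
    exact lt_of_pow_lt_pow_left₀ 2 (by rw [ht]; positivity) (by linarith)
  · rw [key, Real.sqrt_mul (show 0 ≤ R1 * R2 by positivity), Real.sqrt_sq (by positivity), hsum, abs_mul,
      abs_of_pos (show 0 < 2 * Real.sin ((A + B) / 2) by positivity)]
    have : 0 < Real.sqrt (R1 * R2) := Real.sqrt_pos.mpr (by positivity)
    have h1 := hsa.ne'
    field_simp
end

section
/- In the configuration below, let t > 0 with t ≠ r₁ + r₂ and t ≠ D, and let S = {s > 0 : f(s) = t} (a finite set). Then Σ_{s ∈ S} (1/(4π)) (r₁(s) r₂(s))^{−1/2} · sin((θ₁(s)+θ₂(s))/2) / |sin θ₁(s) + sin θ₂(s)| equals: 0 if t < r₁ + r₂ and (x₁y₂ − x₂y₁ ≤ 0 or t < D); (1/(2π)) (t² − D²)^{−1/2} if x₁y₂ − x₂y₁ > 0 and D < t < r₁ + r₂; and (1/(4π)) (t² − D²)^{−1/2} if t > r₁ + r₂. These three values are exactly the Cheeger–Taylor formulas for the sine wave kernel E(t, q₁; q₂) on the cone of angle 4π in the regions before the geometric front, between the geometric and diffracted fronts, and beyond the diffracted front; this verifies the moving-conical-point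 representation E(t, q₁, q₂) = (1/(4π)) ∫_0^∞ (r₁(s)r₂(s))^{−1/2} δ(t − r₁(s) − r₂(s)) sin((θ₁(s)+θ₂(s))/2) ds. -/
open Real

lemma mcp_sconv (x y : ℝ) (hx : x ≠ 0) :
    StrictConvexOn ℝ Set.univ (fun s : ℝ => Real.sqrt (x ^ 2 + (y - s) ^ 2)) := by
  refine ⟨convex_univ, ?_⟩
  intro u _ v _ huv a b ha hb hab
  simp only [smul_eq_mul]
  have hx2 : 0 < x ^ 2 := by positivity
  have hU : 0 < Real.sqrt (x ^ 2 + (y - u) ^ 2) := Real.sqrt_pos.2 (by positivity)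
  have hV : 0 < Real.sqrt (x ^ 2 + (y - v) ^ 2) := Real.sqrt_pos.2 (by positivity)
  have hU2 : Real.sqrt (x ^ 2 + (y - u) ^ 2) ^ 2 = x ^ 2 + (y - u) ^ 2 :=
    Real.sq_sqrt (by positivity)
  have hV2 : Real.sqrt (x ^ 2 + (y - v) ^ 2) ^ 2 = x ^ 2 + (y - v) ^ 2 :=
    Real.sq_sqrt (by positivity)
  set U := Real.sqrt (x ^ 2 + (y - u) ^ 2)
  set V := Real.sqrt (x ^ 2 + (y - v) ^ 2)
  have hcs : x ^ 2 + (y - u) * (y - v) < U * V := by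
    apply lt_of_pow_lt_pow_left₀ 2 (by positivity)
    rw [mul_pow, hU2, hV2]
    have : 0 < x ^ 2 * (u - v) ^ 2 := by
      have : u - v ≠ 0 := sub_ne_zero.2 huv
      positivity
    nlinarith
  rw [Real.sqrt_lt' (by positivity)]
  have hb' : b = 1 - a := by linarith
  have hp : 0 < 2 * (a * b) * (U * V - (x ^ 2 + (y - u) * (y - v))) := by
    have : 0 < U * V - (x ^ 2 + (y - u) * (y - v)) := by linarith
    positivity
  have : (a * U + b * V) ^ 2 = a ^ 2 * U ^ 2 + b ^ 2 * V ^ 2 + 2 * (a * b) * (U * V) := by ring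
  rw [this, hU2, hV2]
  subst hb'
  nlinarith

lemma mcp_quasi {f : ℝ → ℝ} (hf : StrictConvexOn ℝ Set.univ f) {a b c t : ℝ}
    (hab : a < b) (hbc : b < c) (ha : f a ≤ t) (hc : f c ≤ t) : f b < t := by
  have hac : a < c := hab.trans hbc
  have := hf.lt_on_openSegment (Set.mem_univ a) (Set.mem_univ c) hac.ne
    (z := b) (by rw [openSegment_eq_Ioo hac]; exact ⟨hab, hbc⟩)
  exact this.trans_le (max_le ha hc)

lemma mcp_term (R₁ R₂ a b D t : ℝ) (h1 : 0 < R₁) (h2 : 0 < R₂)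
    (ha : a ∈ Set.Ioo (-(π / 2)) (π / 2)) (hb : b ∈ Set.Ioo (π / 2) (3 * π / 2))
    (hD : D ^ 2 = (R₁ * cos a - R₂ * cos b) ^ 2 + (R₁ * sin a - R₂ * sin b) ^ 2)
    (ht : R₁ + R₂ = t) :
    (1 / (4 * π)) * (Real.sqrt (R₁ * R₂))⁻¹ * (sin ((a + b) / 2) / |sin a + sin b|)
      = (1 / (4 * π)) * (Real.sqrt (t ^ 2 - D ^ 2))⁻¹ ∧ D ^ 2 ≤ t ^ 2 := by
  obtain ⟨ha1, ha2⟩ := ha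
  obtain ⟨hb1, hb2⟩ := hb
  have hs : 0 < sin ((a + b) / 2) := sin_pos_of_pos_of_lt_pi (by linarith) (by linarith)
  have e1 : sin a + sin b = 2 * sin ((a + b) / 2) * cos ((a - b) / 2) := by
    have h := sin_add ((a + b) / 2) ((a - b) / 2)
    have h' := sin_sub ((a + b) / 2) ((a - b) / 2)
    rw [show (a + b) / 2 + (a - b) / 2 = a by ring] at h
    rw [show (a + b) / 2 - (a - b) / 2 = b by ring] at h'
    rw [h, h']; ring
  have e2 : cos a * cos b + sin a * sin b = 2 * cos ((a - b) / 2) ^ 2 - 1 := by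
    rw [← cos_sub, ← cos_two_mul]; congr 1; ring
  have e3 : t ^ 2 - D ^ 2 = (R₁ * R₂) * (2 * cos ((a - b) / 2)) ^ 2 := by
    rw [hD, ← ht]
    have i1 := sin_sq_add_cos_sq a
    have i2 := sin_sq_add_cos_sq b
    linear_combination (-R₁ ^ 2) * i1 + (-R₂ ^ 2) * i2 + 2 * R₁ * R₂ * e2
  refine ⟨?_, ?_⟩
  · rw [e3, Real.sqrt_mul (show 0 ≤ R₁ * R₂ by positivity) ((2 * cos ((a - b) / 2)) ^ 2), Real.sqrt_sq_eq_abs, e1, mul_inv, mul_assoc]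
    congr 2
    rw [show 2 * sin ((a + b) / 2) * cos ((a - b) / 2)
      = sin ((a + b) / 2) * (2 * cos ((a - b) / 2)) by ring, abs_mul, abs_of_pos hs,
      div_mul_eq_div_div, div_self hs.ne', one_div]
  · have : 0 ≤ (R₁ * R₂) * (2 * cos ((a - b) / 2)) ^ 2 := by positivity
    linarith

/-- The moving-conical-point representation reproduces the Cheeger–Taylor formulas for
the sine wave kernel on `C_{4π}`: with `q₁ = (x₁,y₁)`, `x₁ > 0`, `q₂ = (x₂,y₂)`,
`x₂ < 0`, `p(s) = (0,s)`, `rᵢ(s) = ‖qᵢ - p(s)‖`, `θ₁(s) ∈ (-π/2,π/2)`,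
`θ₂(s) ∈ (π/2,3π/2)` the polar angles of `qᵢ - p(s)`, `D = ‖q₁ - q₂‖`,
`f(s) = r₁(s) + r₂(s)` and the finite set `S = {s > 0 : f(s) = t}`, the sum
`∑_{s ∈ S} (1/4π)(r₁(s)r₂(s))^{-1/2} sin((θ₁(s)+θ₂(s))/2)/|sin θ₁(s)+sin θ₂(s)|`
equals `0` before the geometric front, `(1/2π)(t²-D²)^{-1/2}` between the geometric
and diffracted fronts, and `(1/4π)(t²-D²)^{-1/2}` beyond the diffracted front. -/
theorem moving_cone_point_cheeger_taylor
    (x₁ y₁ x₂ y₂ : ℝ) (hx₁ : 0 < x₁) (hx₂ : x₂ < 0)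
    (r₁ r₂ : ℝ → ℝ)
    (hr₁ : r₁ = fun s : ℝ => Real.sqrt (x₁ ^ 2 + (y₁ - s) ^ 2))
    (hr₂ : r₂ = fun s : ℝ => Real.sqrt (x₂ ^ 2 + (y₂ - s) ^ 2))
    (θ₁ θ₂ : ℝ → ℝ)
    (hθ₁ : ∀ s : ℝ, 0 ≤ s → θ₁ s ∈ Set.Ioo (-(π / 2)) (π / 2) ∧
      x₁ = r₁ s * Real.cos (θ₁ s) ∧ y₁ - s = r₁ s * Real.sin (θ₁ s))
    (hθ₂ : ∀ s : ℝ, 0 ≤ s → θ₂ s ∈ Set.Ioo (π / 2) (3 * π / 2) ∧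
      x₂ = r₂ s * Real.cos (θ₂ s) ∧ y₂ - s = r₂ s * Real.sin (θ₂ s))
    (D : ℝ) (hD : D = Real.sqrt ((x₁ - x₂) ^ 2 + (y₁ - y₂) ^ 2))
    (f : ℝ → ℝ) (hf : f = fun s : ℝ => r₁ s + r₂ s)
    (t : ℝ) (ht : 0 < t) (ht₁ : t ≠ r₁ 0 + r₂ 0) (ht₂ : t ≠ D)
    (S : Set ℝ) (hS : S = {s : ℝ | 0 < s ∧ f s = t}) (hSfin : S.Finite) :
    ((t < r₁ 0 + r₂ 0 ∧ (x₁ * y₂ - x₂ * y₁ ≤ 0 ∨ t < D)) →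
      ∑ s ∈ hSfin.toFinset,
        (1 / (4 * π)) * (Real.sqrt (r₁ s * r₂ s))⁻¹ *
          (Real.sin ((θ₁ s + θ₂ s) / 2) / |Real.sin (θ₁ s) + Real.sin (θ₂ s)|) = 0) ∧
    ((0 < x₁ * y₂ - x₂ * y₁ ∧ D < t ∧ t < r₁ 0 + r₂ 0) →
      ∑ s ∈ hSfin.toFinset,
        (1 / (4 * π)) * (Real.sqrt (r₁ s * r₂ s))⁻¹ *
          (Real.sin ((θ₁ s + θ₂ s) / 2) / |Real.sin (θ₁ s) + Real.sin (θ₂ s)|)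
        = (1 / (2 * π)) * (Real.sqrt (t ^ 2 - D ^ 2))⁻¹) ∧
    (r₁ 0 + r₂ 0 < t →
      ∑ s ∈ hSfin.toFinset,
        (1 / (4 * π)) * (Real.sqrt (r₁ s * r₂ s))⁻¹ *
          (Real.sin ((θ₁ s + θ₂ s) / 2) / |Real.sin (θ₁ s) + Real.sin (θ₂ s)|)
        = (1 / (4 * π)) * (Real.sqrt (t ^ 2 - D ^ 2))⁻¹) := by
  have hD0 : 0 ≤ D := hD ▸ Real.sqrt_nonneg _
  have hD2 : D ^ 2 = (x₁ - x₂) ^ 2 + (y₁ - y₂) ^ 2 := by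
    rw [hD]; exact Real.sq_sqrt (by positivity)
  have p1 : ∀ s, 0 < r₁ s := fun s => by
    rw [hr₁]; exact Real.sqrt_pos.2 (by positivity)
  have hx₂' : 0 < x₂ ^ 2 := by have := hx₂.ne; positivity
  have p2 : ∀ s, 0 < r₂ s := fun s => by
    rw [hr₂]; exact Real.sqrt_pos.2 (by positivity)
  have key : ∀ s t' : ℝ, 0 ≤ s → f s = t' → _ := fun s t' hs h =>
    mcp_term (r₁ s) (r₂ s) (θ₁ s) (θ₂ s) D t' (p1 s) (p2 s) (hθ₁ s hs).1 (hθ₂ s hs).1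
      (by rw [← (hθ₁ s hs).2.1, ← (hθ₁ s hs).2.2, ← (hθ₂ s hs).2.1, ← (hθ₂ s hs).2.2, hD2]
          ring)
      (by rw [← h, hf])
  have fpos : ∀ s, 0 < f s := fun s => by rw [hf]; exact add_pos (p1 s) (p2 s)
  have fD : ∀ s, 0 ≤ s → D ≤ f s := fun s hs =>
    (sq_le_sq₀ hD0 (fpos s).le).1 (key s _ hs rfl).2
  have f0 : f 0 = r₁ 0 + r₂ 0 := by rw [hf]
  have hconv : StrictConvexOn ℝ Set.univ f := by
    rw [hf, hr₁, hr₂]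
    exact (mcp_sconv x₁ y₁ hx₁.ne').add (mcp_sconv x₂ y₂ hx₂.ne)
  have hcont : Continuous f := by
    rw [hf, hr₁, hr₂]; fun_prop
  have hlarge : ∀ s, s - y₁ ≤ f s := fun s => by
    have h1 : s - y₁ ≤ r₁ s := by
      rw [hr₁]; apply Real.le_sqrt_of_sq_le; nlinarith
    have := p2 s
    rw [hf]; simp only; linarith
  have hx : 0 < x₁ - x₂ := by linarith
  obtain ⟨c, hc⟩ : ∃ c, c = (x₁ * y₂ - x₂ * y₁) / (x₁ - x₂) := ⟨_, rfl⟩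
  have fc : f c = D := by
    have a1 : y₁ - c = x₁ * (y₁ - y₂) / (x₁ - x₂) := by rw [hc]; field_simp; ring
    have a2 : y₂ - c = x₂ * (y₁ - y₂) / (x₁ - x₂) := by rw [hc]; field_simp; ring
    have b1 : r₁ c = x₁ * D / (x₁ - x₂) := by
      rw [hr₁]; simp only
      rw [a1, Real.sqrt_eq_iff_eq_sq (by positivity) (by positivity), div_pow, div_pow, mul_pow, mul_pow,
        hD2]
      field_simp
    have b2 : r₂ c = -x₂ * D / (x₁ - x₂) := by
      have : 0 < -x₂ := by linarith
      rw [hr₂]; simp only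
      rw [a2, Real.sqrt_eq_iff_eq_sq (by positivity) (by positivity), div_pow, div_pow, mul_pow, mul_pow,
        hD2]
      field_simp
    rw [hf]; simp only
    rw [b1, b2]; field_simp; ring
  have hmem : ∀ s, s ∈ hSfin.toFinset ↔ 0 < s ∧ f s = t := fun s => by
    rw [Set.Finite.mem_toFinset, hS]; rfl
  have hsum : ∀ F : Finset ℝ, hSfin.toFinset = F → ∑ s ∈ hSfin.toFinset,
        (1 / (4 * π)) * (Real.sqrt (r₁ s * r₂ s))⁻¹ *
          (Real.sin ((θ₁ s + θ₂ s) / 2) / |Real.sin (θ₁ s) + Real.sin (θ₂ s)|)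
        = F.card * ((1 / (4 * π)) * (Real.sqrt (t ^ 2 - D ^ 2))⁻¹) := by
    intro F hF
    rw [← hF, ← nsmul_eq_mul]
    apply Finset.sum_eq_card_nsmul
    intro s hs
    have := (hmem s).1 hs
    exact (key s t this.1.le this.2).1
  refine ⟨?_, ?_, ?_⟩
  · rintro ⟨h1, h2⟩
    rw [hsum ∅ ?_]
    · simp
    rw [Finset.eq_empty_iff_forall_notMem]
    intro s hs
    obtain ⟨hs0, hst⟩ := (hmem s).1 hs
    have hDs := fD s hs0.le
    rcases h2 with h2 | h2
    · have hc0 : c ≤ 0 := by rw [hc]; exact div_nonpos_of_nonpos_of_nonneg h2 hx.le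
      rcases hc0.lt_or_eq with h | h
      · have := mcp_quasi hconv h hs0 (t := t) (by linarith) hst.le
        linarith
      · rw [h] at fc; linarith
    · linarith
  · rintro ⟨h1, h2, h3⟩
    have hc0 : 0 < c := by rw [hc]; exact div_pos h1 hx
    obtain ⟨a, ⟨ha1, ha2⟩, ha⟩ := intermediate_value_Ioo' hc0.le hcont.continuousOn
      (show t ∈ Set.Ioo (f c) (f 0) from ⟨by linarith, by linarith⟩)
    have hM := hlarge (c + t + |y₁| + 1 + y₁ - y₁)
    have hy := le_abs_self y₁
    obtain ⟨b, ⟨hb1, hb2⟩, hb⟩ := intermediate_value_Ioo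
      (show c ≤ c + t + |y₁| + 1 + y₁ - y₁ by linarith [abs_nonneg y₁]) hcont.continuousOn
      (show t ∈ Set.Ioo (f c) (f (c + t + |y₁| + 1 + y₁ - y₁)) from ⟨by linarith, by linarith⟩)
    rw [hsum {a, b} ?_]
    · rw [Finset.card_pair (by linarith : a < b).ne]
      push_cast; field_simp; norm_num
    ext s
    rw [hmem, Finset.mem_insert, Finset.mem_singleton]
    constructor
    · rintro ⟨hs0, hst⟩
      by_contra! hne
      obtain ⟨n1, n2⟩ := hne
      rcases n1.lt_or_gt with h | h
      · have := mcp_quasi hconv h (by linarith : a < b) hst.le hb.le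
        linarith
      · rcases n2.lt_or_gt with h' | h'
        · have := mcp_quasi hconv h h' ha.le hb.le
          linarith
        · have := mcp_quasi hconv (by linarith : a < b) h' ha.le hst.le
          linarith
    · rintro (rfl | rfl)
      · exact ⟨ha1, ha⟩
      · exact ⟨by linarith, hb⟩
  · intro h1
    have hM := hlarge (t + |y₁| + 1)
    have hy := le_abs_self y₁
    obtain ⟨a, ⟨ha1, ha2⟩, ha⟩ := intermediate_value_Ioo
      (show 0 ≤ t + |y₁| + 1 by positivity) hcont.continuousOn
      (show t ∈ Set.Ioo (f 0) (f (t + |y₁| + 1)) from ⟨by linarith, by linarith⟩)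
    rw [hsum {a} ?_]
    · simp
    ext s
    rw [hmem, Finset.mem_singleton]
    constructor
    · rintro ⟨hs0, hst⟩
      by_contra hne
      rcases lt_or_gt_of_ne hne with h | h
      · have := mcp_quasi hconv hs0 h (t := t) (by linarith) ha.le
        linarith
      · have := mcp_quasi hconv ha1 h (t := t) (by linarith) hst.le
        linarith
    · rintro rfl
      exact ⟨ha1, ha⟩
end
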